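/- arXiv:1208.2210 — 3 statements merged into one kernel-verified Lean document; each statement's English description precedes it below -/
import Mathlib

section
/- For every natural number n, PD(3n + 2) is divisible by 3. -/
open Finset

/-- The number of partitions of `n` with designated summands: for each part size that occurs,
one part of that size is designated, so each partition `λ` contributes
`∏_{k distinct part size of λ} m_k(λ)`. -/
def PD (n : ℕ) : ℕ :=
  ∑ p : Nat.Partition n, ∏ k ∈ p.parts.toFinset, p.parts.count k

/-!
Each part size `k` contributes `1 + ∑ m q^{km} = (1 - q^k + q^{2k}) / (1 - q^k)²` to the generating
function of `PD`, and `1 - y + y² ≡ (1 + y)²` modulo 3. By Gauss's identity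
`∏ (1 - q^k) / (1 + q^k) = ∑_{k ∈ ℤ} (-1)^k q^{k²} =: θ`, the generating function is therefore
congruent to `θ⁻² = θ · (θ⁻¹)³`. Modulo 3 a cube is a series in `q³`, while no square is congruent
to `2`, so no exponent congruent to `2` survives in the product.
-/

open PowerSeries Filter
open scoped PowerSeries.WithPiTopology Topology

section FiniteGauss

variable {A : Type*} [CommRing A]

/-- The `s`-th error term in `gauss_finite_identity`, the finite form of Gauss's identity; it is
divisible by `x ^ (n + 1)`. The index `s` is shifted by one, matching the term
`x ^ ((s + 1) ^ 2)`. -/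
def gaussRemainder (x : A) (n s : ℕ) : A :=
  2 * (-1) ^ (s + 1) * x ^ ((s + 1) * (n + 1)) *
    (∏ k ∈ range s, (1 + x ^ (k + 1))) * ∏ k ∈ Ico (s + 1) n, (1 - x ^ (k + 1))

/-- The antidifference in `s` of `gaussRemainder x (n + 1) s - (1 + x ^ (n + 1)) *
gaussRemainder x n s`, which makes the induction on `n` in `gauss_finite_identity` telescope. For
`s < n` it is `gaussRemainder x n s` times `1 - x ^ (s + 1)`. -/
def gaussTelescope (x : A) (n s : ℕ) : A :=
  2 * (-1) ^ (s + 1) * x ^ ((s + 1) * (n + 1)) *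
    (∏ k ∈ range s, (1 + x ^ (k + 1))) * ∏ k ∈ Ico s n, (1 - x ^ (k + 1))

lemma gaussRemainder_succ_sub (x : A) {n s : ℕ} (hs : s < n) :
    gaussRemainder x (n + 1) s - (1 + x ^ (n + 1)) * gaussRemainder x n s =
      gaussTelescope x n (s + 1) - gaussTelescope x n s := by
  simp only [gaussRemainder, gaussTelescope, prod_Ico_succ_top (Nat.succ_le_of_lt hs),
    prod_eq_prod_Ico_succ_bot hs, prod_range_succ]
  ring

lemma gaussRemainder_succ_self_add (x : A) (n : ℕ) :
    gaussRemainder x (n + 1) n + gaussTelescope x n n =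
      2 * (-1) ^ (n + 1) * x ^ ((n + 1) ^ 2) * ∏ k ∈ range (n + 1), (1 + x ^ (k + 1)) := by
  simp only [gaussRemainder, gaussTelescope, Ico_self, prod_empty, prod_range_succ]
  ring

lemma gaussTelescope_zero (x : A) (n : ℕ) :
    gaussTelescope x n 0 = -2 * x ^ (n + 1) * ∏ k ∈ range n, (1 - x ^ (k + 1)) := by
  simp [gaussTelescope]

lemma sum_gaussRemainder_succ (x : A) (n : ℕ) :
    ∑ s ∈ range (n + 1), gaussRemainder x (n + 1) s =
      (1 + x ^ (n + 1)) * ∑ s ∈ range n, gaussRemainder x n s +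
        2 * (-1) ^ (n + 1) * x ^ ((n + 1) ^ 2) * ∏ k ∈ range (n + 1), (1 + x ^ (k + 1)) +
        2 * x ^ (n + 1) * ∏ k ∈ range n, (1 - x ^ (k + 1)) := by
  have telescope : ∑ s ∈ range n,
      (gaussRemainder x (n + 1) s - (1 + x ^ (n + 1)) * gaussRemainder x n s) =
        gaussTelescope x n n - gaussTelescope x n 0 := by
    rw [← sum_range_sub]
    exact sum_congr rfl fun s hs ↦ gaussRemainder_succ_sub x (mem_range.mp hs)
  rw [sum_sub_distrib, ← mul_sum, gaussTelescope_zero] at telescope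
  rw [sum_range_succ]
  linear_combination telescope + gaussRemainder_succ_self_add x n

theorem gauss_finite_identity (x : A) (n : ℕ) :
    (1 + ∑ s ∈ range n, 2 * (-1) ^ (s + 1) * x ^ ((s + 1) ^ 2)) *
        ∏ k ∈ range n, (1 + x ^ (k + 1)) =
      ∏ k ∈ range n, (1 - x ^ (k + 1)) + ∑ s ∈ range n, gaussRemainder x n s := by
  induction n with
  | zero => simp
  | succ n ih =>
    rw [sum_gaussRemainder_succ, sum_range_succ, prod_range_succ, prod_range_succ]
    linear_combination (1 + x ^ (n + 1)) * ih

lemma pow_dvd_gaussRemainder (x : A) (n s : ℕ) : x ^ (n + 1) ∣ gaussRemainder x n s := by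
  have hpow : x ^ (n + 1) ∣ x ^ ((s + 1) * (n + 1)) :=
    pow_dvd_pow x (Nat.le_mul_of_pos_left _ s.succ_pos)
  exact ((hpow.mul_left _).mul_right _).mul_right _

end FiniteGauss

section Gauss

variable (R : Type*) [CommRing R]

/-- Gauss's theta series `φ(-q) = ∑_{k ∈ ℤ} (-1)^k q^{k²}`, given by its coefficients: the terms `k`
and `-k` coincide, and `(-1)^k = (-1)^{k²}`. -/
noncomputable def gaussTheta : R⟦X⟧ :=
  PowerSeries.mk fun n ↦ if n = 0 then 1 else if IsSquare n then 2 * (-1) ^ n else 0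

lemma coeff_gaussTheta_eq_zero {n : ℕ} (hn : ¬IsSquare n) : coeff n (gaussTheta R) = 0 := by
  have hn0 : n ≠ 0 := fun h ↦ hn (h ▸ IsSquare.zero)
  simp [gaussTheta, hn, hn0]

lemma coeff_gaussTheta_sq (s : ℕ) :
    coeff ((s + 1) ^ 2) (gaussTheta R) = 2 * (-1) ^ (s + 1) := by
  have hparity : (-1 : R) ^ ((s + 1) ^ 2) = (-1) ^ (s + 1) :=
    neg_one_pow_congr (by simp [Nat.even_pow])
  simp [gaussTheta, hparity, IsSquare.sq]

variable [TopologicalSpace R]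

lemma hasSum_gaussTheta :
    HasSum (fun s : ℕ ↦ (2 * (-1) ^ (s + 1) * X ^ ((s + 1) ^ 2) : R⟦X⟧)) (gaussTheta R - 1) := by
  have hterm (s : ℕ) : (2 * (-1) ^ (s + 1) * X ^ ((s + 1) ^ 2) : R⟦X⟧) =
      C (2 * (-1) ^ (s + 1)) * X ^ ((s + 1) ^ 2) := by
    simp only [map_mul, map_pow, map_neg, map_one, map_ofNat]
  simp only [WithPiTopology.hasSum_iff_hasSum_coeff, hterm, coeff_C_mul_X_pow]
  intro d
  by_cases hd : ∃ t, d = (t + 1) ^ 2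
  · obtain ⟨t, rfl⟩ := hd
    convert hasSum_single t fun s hs ↦ if_neg fun h ↦ hs ?_ using 1
    · simp [coeff_gaussTheta_sq, coeff_one]
    · simpa using h.symm
  · have hcoeff : coeff d (gaussTheta R - 1) = 0 := by
      rcases Nat.eq_zero_or_pos d with rfl | hpos
      · simp [gaussTheta]
      · rw [map_sub, coeff_one, if_neg hpos.ne', sub_zero, coeff_gaussTheta_eq_zero]
        rintro ⟨r, rfl⟩
        exact hd ⟨r - 1, by rw [Nat.sub_add_cancel (Nat.pos_of_mul_pos_left hpos), sq]⟩
    simp only [not_exists] at hd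
    simp [hd, hcoeff, hasSum_zero]

lemma tendsto_sum_gaussRemainder :
    Tendsto (fun n ↦ ∑ s ∈ range n, gaussRemainder (X : R⟦X⟧) n s) atTop (𝓝 0) := by
  rw [WithPiTopology.tendsto_iff_coeff_tendsto]
  refine fun d ↦ tendsto_atTop_of_eventually_const (i₀ := d) fun n hn ↦ ?_
  have hdvd : (X : R⟦X⟧) ^ (n + 1) ∣ ∑ s ∈ range n, gaussRemainder X n s :=
    dvd_sum fun s _ ↦ pow_dvd_gaussRemainder X n s
  rw [X_pow_dvd_iff.mp hdvd d (Nat.lt_succ_of_le hn), map_zero]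

lemma multipliable_one_add_X_pow : Multipliable fun k ↦ (1 : R⟦X⟧) + X ^ (k + 1) := by
  nontriviality R
  apply WithPiTopology.multipliable_one_add_of_tendsto_order_atTop_nhds_top
  simp only [order_X_pow]
  exact ENat.tendsto_natCast_nhds_top.comp (tendsto_add_atTop_nat 1)

variable [T2Space R]

lemma isUnit_tprod_one_add_X_pow : IsUnit (∏' k, (1 + X ^ (k + 1)) : R⟦X⟧) := by
  rw [isUnit_iff_constantCoeff, (multipliable_one_add_X_pow R).map_tprod _
    (WithPiTopology.continuous_constantCoeff R)]
  simp

variable [IsTopologicalRing R]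

theorem gaussTheta_mul_tprod_one_add_X_pow :
    gaussTheta R * ∏' k, (1 + X ^ (k + 1)) = ∏' k, (1 - X ^ (k + 1)) := by
  have htheta : Tendsto
      (fun n ↦ (1 + ∑ s ∈ range n, 2 * (-1) ^ (s + 1) * X ^ ((s + 1) ^ 2) : R⟦X⟧))
      atTop (𝓝 (gaussTheta R)) := by
    simpa using (hasSum_gaussTheta R).tendsto_sum_nat.const_add 1
  have hleft := htheta.mul (multipliable_one_add_X_pow R).hasProd.tendsto_prod_nat
  have hright := (WithPiTopology.multipliable_one_sub_X_pow R).hasProd.tendsto_prod_nat.add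
    (tendsto_sum_gaussRemainder R)
  simp only [gauss_finite_identity] at hleft
  simpa using tendsto_nhds_unique hleft hright

end Gauss

section GeneratingFunction

lemma one_sub_sq_mul_tsum_nsmul_pow {A : Type*} [Ring A] [TopologicalSpace A]
    [IsTopologicalRing A] [T2Space A] {y : A} (hgeom : Summable fun n : ℕ ↦ y ^ n)
    (hsum : Summable fun n : ℕ ↦ n • y ^ n) : (1 - y) ^ 2 * ∑' n : ℕ, n • y ^ n = y := by
  have hshift : ∑' n : ℕ, n • y ^ n = y * ∑' n : ℕ, n • y ^ n + y * ∑' n : ℕ, y ^ n := by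
    calc ∑' n : ℕ, n • y ^ n = ∑' n : ℕ, (y * n • y ^ n + y * y ^ n) := by
          rw [hsum.tsum_eq_zero_add]
          simp only [zero_smul, zero_add, succ_nsmul, pow_succ', mul_smul_comm]
      _ = _ := by
          rw [(hsum.mul_left y).tsum_add (hgeom.mul_left y), hsum.tsum_mul_left,
            hgeom.tsum_mul_left]
  have hfirst : (1 - y) * ∑' n : ℕ, n • y ^ n = y * ∑' n : ℕ, y ^ n := by
    rw [sub_mul, one_mul, sub_eq_iff_eq_add', ← hshift]
  rw [sq, mul_assoc, hfirst, ← mul_assoc, ← ((Commute.one_right y).sub_right rfl).eq, mul_assoc,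
    hgeom.one_sub_mul_tsum_pow, mul_one]

variable (R : Type*) [CommRing R]

/-- The generating function `∑ PD(n) q^n` with coefficients in `R`. -/
noncomputable def designatedSeries : R⟦X⟧ :=
  PowerSeries.mk fun n ↦ (PD n : R)

lemma coeff_designatedSeries (n : ℕ) : coeff n (designatedSeries R) = PD n :=
  coeff_mk _ _

lemma designatedSeries_eq_genFun :
    designatedSeries R = Nat.Partition.genFun fun _ m ↦ (m : R) := by
  ext n
  simp [coeff_designatedSeries, PD, Finsupp.prod]

section Topological

variable [TopologicalSpace R] [IsTopologicalRing R] [T2Space R]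

lemma one_add_tsum_mul_one_sub_X_pow_sq (i : ℕ) :
    (1 + ∑' j : ℕ, ((j + 1 : ℕ) : R) • X ^ ((i + 1) * (j + 1))) * (1 - X ^ (i + 1)) ^ 2 =
      (1 - X ^ (i + 1) + (X ^ (i + 1)) ^ 2 : R⟦X⟧) := by
  have hsum := Nat.Partition.summable_genFun_term (R := R) (fun _ m ↦ (m : R)) i
  simp only [pow_mul, Nat.cast_smul_eq_nsmul] at hsum ⊢
  set y : R⟦X⟧ := X ^ (i + 1) with hy
  have hgeom := WithPiTopology.summable_pow_of_constantCoeff_eq_zero (f := y) (by simp [hy])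
  have hsum' : Summable fun n : ℕ ↦ n • y ^ n := (summable_nat_add_iff 1).mp hsum
  have hclosed := one_sub_sq_mul_tsum_nsmul_pow hgeom hsum'
  rw [hsum'.tsum_eq_zero_add, zero_smul, zero_add] at hclosed
  linear_combination hclosed

theorem hasProd_designatedSeries_mul :
    HasProd (fun i ↦ (1 - X ^ (i + 1) + (X ^ (i + 1)) ^ 2 : R⟦X⟧))
      (designatedSeries R * (∏' i, (1 - X ^ (i + 1))) ^ 2) := by
  have hdenom := (WithPiTopology.multipliable_one_sub_X_pow R).hasProd
  have hmul := (Nat.Partition.hasProd_genFun fun _ m ↦ (m : R)).mul (hdenom.mul hdenom)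
  simpa only [← sq, one_add_tsum_mul_one_sub_X_pow_sq, ← designatedSeries_eq_genFun] using hmul

theorem designatedSeries_mul_tprod_sq [CharP R 3] :
    designatedSeries R * (∏' i, (1 - X ^ (i + 1))) ^ 2 = (∏' i, (1 + X ^ (i + 1))) ^ 2 := by
  have hthree : (3 : R⟦X⟧) = 0 := by
    rw [← map_ofNat C 3, CharP.ofNat_eq_zero R 3, map_zero]
  have hfactor (i : ℕ) : (1 - X ^ (i + 1) + (X ^ (i + 1)) ^ 2 : R⟦X⟧) =
      (1 + X ^ (i + 1)) * (1 + X ^ (i + 1)) := by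
    linear_combination -X ^ (i + 1) * hthree
  have hprod := (multipliable_one_add_X_pow R).hasProd
  have hmul := hasProd_designatedSeries_mul R
  simp only [hfactor] at hmul
  rw [sq (∏' i, (1 + X ^ (i + 1)))]
  exact hmul.unique (hprod.mul hprod)

end Topological

theorem designatedSeries_mul_gaussTheta_sq [CharP R 3] :
    designatedSeries R * gaussTheta R ^ 2 = 1 := by
  let : TopologicalSpace R := ⊥
  have : DiscreteTopology R := ⟨rfl⟩
  apply ((isUnit_tprod_one_add_X_pow R).pow 2).mul_right_cancel
  rw [mul_assoc, ← mul_pow, gaussTheta_mul_tprod_one_add_X_pow, designatedSeries_mul_tprod_sq,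
    one_mul]

end GeneratingFunction

section ExpChar

variable {R : Type*} [CommRing R] {p : ℕ} [ExpChar R p]

lemma coeff_pow_expChar_of_not_dvd (f : R⟦X⟧) {n : ℕ} (hn : ¬p ∣ n) : coeff n (f ^ p) = 0 := by
  have hp : p ≠ 0 := expChar_ne_zero R p
  have hfrob : (expand p hp f).map (frobenius R p) = f ^ p :=
    MvPowerSeries.map_frobenius_expand p hp
  rw [← hfrob, coeff_map, coeff_expand_of_not_dvd p hp f hn, map_zero]

lemma coeff_mul_pow_expChar_eq_zero {f : R⟦X⟧} (g : R⟦X⟧) {n : ℕ}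
    (hf : ∀ m, m ≡ n [MOD p] → coeff m f = 0) : coeff n (f * g ^ p) = 0 := by
  rw [coeff_mul]
  refine sum_eq_zero fun ⟨a, b⟩ hab ↦ ?_
  rw [HasAntidiagonal.mem_antidiagonal] at hab
  by_cases hb : p ∣ b
  · have ha : a ≡ n [MOD p] := by
      simpa [← hab] using (Nat.modEq_zero_iff_dvd.mpr hb).symm.add_left a
    rw [hf a ha, zero_mul]
  · rw [coeff_pow_expChar_of_not_dvd g hb, mul_zero]

end ExpChar

lemma not_isSquare_of_mod_three_eq_two {n : ℕ} (hn : n % 3 = 2) : ¬IsSquare n := by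
  rintro ⟨r, rfl⟩
  have hr : r % 3 < 3 := Nat.mod_lt r (by decide)
  rw [Nat.mul_mod] at hn
  interval_cases r % 3 <;> omega

theorem PD_three_n_add_two_congruence (n : ℕ) : 3 ∣ PD (3 * n + 2) := by
  rw [← ZMod.natCast_eq_zero_iff, ← coeff_designatedSeries]
  set F := designatedSeries (ZMod 3)
  set θ := gaussTheta (ZMod 3)
  have hF : F * θ ^ 2 = 1 := designatedSeries_mul_gaussTheta_sq (ZMod 3)
  have hcube : F = θ * (F * θ) ^ 3 := by
    linear_combination -F * (F * θ ^ 2 + 1) * hF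
  rw [hcube]
  refine coeff_mul_pow_expChar_eq_zero _ fun m hm ↦ coeff_gaussTheta_eq_zero _ ?_
  apply not_isSquare_of_mod_three_eq_two
  rw [hm, Nat.mul_add_mod]
end

section
/- For every complex number q with |q| < 1, ∑_{n=0}^∞ PD(3n + 2) q^n = 3 (q^3; q^6)_∞^3 (q^6; q^6)_∞^6 / ((q; q^2)_∞^5 (q^2; q^2)_∞^8). -/
open Finset

/-- The q-shifted factorial `(a; q)_∞ = ∏_{n=0}^∞ (1 - a qⁿ)`. -/
noncomputable def qPoch (a q : ℂ) : ℂ := ∏' n : ℕ, (1 - a * q ^ n)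

/-!
Write `E(q) = (q; q)_∞`. In the generating function of `PD`, parts of size `i` contribute the
factor `1 + x / (1 - x)² = (1 - x⁶) / ((1 - x) (1 - x²) (1 - x³))` with `x = qⁱ`, so
`∑ PD(n) qⁿ = E(q⁶) / (E(q) E(q²) E(q³))`. Since `E(q³)` and `E(q⁶)` are unchanged when `q` is
multiplied by a cube root of unity, extracting the exponents `3 n + 2` only requires averaging
`1 / (E(q) E(q²))` over the cube roots of unity `ω`.

Jacobi's triple product identity makes `E(q)² / E(q²)` and `2 E(q²)² / E(q)` theta series, which are
easily split by exponents modulo `3`; as their product is `2 E(q) E(q²)`, this gives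
`E(q) E(q²) = A + B q + C q²` with `A`, `B`, `C` functions of `q³`. The average has numerator
proportional to `B² - A C`, which collapses to `3 B²` because `A C = -2 B²`, and its denominator
`∏ E(ω q) E(ω² q²)` is an explicit quotient of values of `E`.
-/

open Filter Topology

namespace QSeries

/-- The triangular number `m (m - 1) / 2` of an integer `m`, the exponent of the base in a theta
series; the division is exact. -/
def triangular (m : ℤ) : ℤ := m * (m - 1) / 2

lemma two_mul_triangular (m : ℤ) : 2 * triangular m = m * (m - 1) :=
  Int.mul_ediv_cancel' (Int.even_mul_pred_self m).two_dvd

lemma triangular_add (a b : ℤ) : triangular (a + b) = triangular a + triangular b + a * b := by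
  linarith [two_mul_triangular a, two_mul_triangular b, two_mul_triangular (a + b)]

lemma triangular_neg (m : ℤ) : triangular (-m) = triangular m + m := by
  linarith [two_mul_triangular m, two_mul_triangular (-m)]

lemma triangular_mul (k m : ℤ) :
    triangular (k * m) = k ^ 2 * triangular m + triangular k * m := by
  refine mul_left_cancel₀ (two_ne_zero' ℤ) ?_
  linear_combination two_mul_triangular (k * m) - k ^ 2 * two_mul_triangular m
    - m * two_mul_triangular k

lemma triangular_natCast (n : ℕ) : triangular n = n.choose 2 := by
  induction n with
  | zero => rfl
  | succ n ih =>
    rw [Nat.cast_succ, triangular_add, ih, Nat.choose_succ_succ' n 1]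
    simp [triangular, add_comm]

section QBinomial

variable {R : Type*} [CommRing R] (a q : R)

/-- The finite q-shifted factorial `(a; q)_n = ∏_{i < n} (1 - a qⁱ)`. -/
def finQPoch (n : ℕ) : R := ∏ i ∈ range n, (1 - a * q ^ i)

@[simp] lemma finQPoch_zero : finQPoch a q 0 = 1 := rfl

lemma finQPoch_succ (n : ℕ) : finQPoch a q (n + 1) = finQPoch a q n * (1 - a * q ^ n) :=
  prod_range_succ _ _

lemma finQPoch_succ' (n : ℕ) : finQPoch a q (n + 1) = (1 - a) * finQPoch (a * q) q n := by
  simp only [finQPoch, prod_range_succ', pow_zero, mul_one, mul_comm _ (1 - a), pow_succ',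
    mul_assoc]

lemma finQPoch_add (m n : ℕ) :
    finQPoch a q (m + n) = finQPoch a q m * finQPoch (a * q ^ m) q n := by
  simp only [finQPoch, prod_range_add, pow_add, mul_assoc]

/-- The Gaussian binomial coefficients, defined by the `q`-Pascal rule so that they make sense for
every `q`. -/
def gaussBinom : ℕ → ℕ → R
  | _, 0 => 1
  | 0, _ + 1 => 0
  | n + 1, k + 1 => gaussBinom n k + q ^ (k + 1) * gaussBinom n (k + 1)

@[simp] lemma gaussBinom_zero_right (n : ℕ) : gaussBinom q n 0 = 1 := by cases n <;> rfl

lemma gaussBinom_succ_succ (n k : ℕ) :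
    gaussBinom q (n + 1) (k + 1) = gaussBinom q n k + q ^ (k + 1) * gaussBinom q n (k + 1) := rfl

lemma gaussBinom_eq_zero_of_lt {n k : ℕ} (h : n < k) : gaussBinom q n k = 0 := by
  induction n generalizing k with
  | zero => obtain ⟨k, rfl⟩ := Nat.exists_eq_add_one_of_ne_zero h.ne'; rfl
  | succ n ih =>
    obtain ⟨k, rfl⟩ := Nat.exists_eq_add_one_of_ne_zero (Nat.ne_zero_of_lt h)
    rw [gaussBinom_succ_succ, ih (by lia), ih (by lia), mul_zero, add_zero]

lemma gaussBinom_mul_finQPoch_mul_finQPoch (m n : ℕ) :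
    gaussBinom q (m + n) m * finQPoch q q m * finQPoch q q n = finQPoch q q (m + n) := by
  induction m generalizing n with
  | zero => simp
  | succ m ihm =>
    induction n with
    | zero =>
      have h := ihm 0
      simp only [add_zero, finQPoch_zero, mul_one] at h ⊢
      rw [gaussBinom_succ_succ, gaussBinom_eq_zero_of_lt q m.lt_succ_self, finQPoch_succ]
      linear_combination (1 - q * q ^ m) * h
    | succ n ihn =>
      have hm := ihm (n + 1)
      rw [← add_assoc] at hm
      rw [add_right_comm] at ihn
      rw [show m + 1 + (n + 1) = m + n + 1 + 1 by ring, gaussBinom_succ_succ,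
        finQPoch_succ q q (m + n + 1)]
      rw [finQPoch_succ q q n] at hm ⊢
      rw [finQPoch_succ q q m] at ihn ⊢
      linear_combination (1 - q * q ^ m) * hm + q ^ (m + 1) * (1 - q * q ^ n) * ihn

/-- The `q`-binomial theorem. -/
theorem finQPoch_eq_sum_gaussBinom (n : ℕ) :
    finQPoch a q n = ∑ j ∈ range (n + 1), gaussBinom q n j * (q ^ j.choose 2 * (-a) ^ j) := by
  induction n generalizing a with
  | zero => simp
  | succ n ih =>
    set s : ℕ → R := fun j ↦ gaussBinom q n j * (q ^ j.choose 2 * (-(a * q)) ^ j)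
    have term_succ (j : ℕ) : gaussBinom q (n + 1) (j + 1) *
        (q ^ (j + 1).choose 2 * (-a) ^ (j + 1)) = -a * s j + s (j + 1) := by
      simp only [s, gaussBinom_succ_succ, Nat.choose_succ_succ' j 1, Nat.choose_one_right]
      ring
    have sum_shift : ∑ j ∈ range (n + 1), s (j + 1) + 1 = ∑ j ∈ range (n + 1), s j := by
      have := sum_range_succ' s (n + 1)
      rw [sum_range_succ] at this
      simpa [s, gaussBinom_eq_zero_of_lt q n.lt_succ_self] using this.symm
    rw [finQPoch_succ', ih, sum_range_succ' _ (n + 1)]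
    simp only [term_succ, sum_add_distrib, ← mul_sum, gaussBinom_zero_right,
      Nat.choose_zero_succ, pow_zero]
    linear_combination -sum_shift

end QBinomial

section ThetaTerm

variable {K : Type*} [Field K] {z q : K}

/-- The term `(-z)ᵐ q^(m (m - 1) / 2)` of the theta series in Jacobi's triple product identity. -/
def thetaTerm (z q : K) (m : ℤ) : K := (-z) ^ m * q ^ triangular m

lemma thetaTerm_natCast (z q : K) (n : ℕ) : thetaTerm z q n = (-z) ^ n * q ^ n.choose 2 := by
  rw [thetaTerm, triangular_natCast, zpow_natCast, zpow_natCast]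

lemma thetaTerm_ne_zero (hz : z ≠ 0) (hq : q ≠ 0) (m : ℤ) : thetaTerm z q m ≠ 0 :=
  mul_ne_zero (zpow_ne_zero _ (neg_ne_zero.2 hz)) (zpow_ne_zero _ hq)

lemma thetaTerm_add (hz : z ≠ 0) (hq : q ≠ 0) (m n : ℤ) :
    thetaTerm z q (m + n) = thetaTerm z q m * thetaTerm z q n * q ^ (m * n) := by
  simp only [thetaTerm, triangular_add, zpow_add₀ (neg_ne_zero.2 hz), zpow_add₀ hq]
  ring

lemma thetaTerm_add_one (hz : z ≠ 0) (hq : q ≠ 0) (m : ℤ) :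
    thetaTerm z q (m + 1) = thetaTerm z q m * (-z) * q ^ m := by
  rw [thetaTerm_add hz hq, mul_one]
  simp [thetaTerm, triangular]

lemma thetaTerm_neg (hq : q ≠ 0) (m : ℤ) : thetaTerm z q (-m) = thetaTerm (q / z) q m := by
  simp only [thetaTerm, triangular_neg, zpow_add₀ hq, ← div_neg, div_zpow, zpow_neg]
  ring

lemma thetaTerm_natCast_mul (hq : q ≠ 0) (k : ℕ) (m : ℤ) :
    thetaTerm z q (k * m) = thetaTerm (-((-z) ^ k * q ^ k.choose 2)) (q ^ k ^ 2) m := by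
  simp only [thetaTerm, triangular_mul, triangular_natCast, zpow_add₀ hq, zpow_mul, neg_neg,
    mul_zpow]
  norm_cast
  ring

lemma thetaTerm_natCast_mul_add (hz : z ≠ 0) (hq : q ≠ 0) (k r : ℕ) (m : ℤ) :
    thetaTerm z q (k * m + r) =
      thetaTerm z q r * thetaTerm (-((-z) ^ k * q ^ (k.choose 2 + k * r))) (q ^ k ^ 2) m := by
  have h : q ^ (k * m * r) = (q ^ (k * r)) ^ m := by
    rw [← zpow_natCast, ← zpow_mul]; push_cast; ring_nf
  rw [thetaTerm_add hz hq, thetaTerm_natCast_mul hq, h]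
  simp only [thetaTerm, neg_neg, pow_add, mul_zpow]
  ring

lemma thetaTerm_neg_natCast_mul_finQPoch (hz : z ≠ 0) (hq : q ≠ 0) (n : ℕ) :
    thetaTerm z q (-n) * finQPoch (z / q ^ n) q n = finQPoch (q / z) q n := by
  induction n with
  | zero => simp [thetaTerm, triangular]
  | succ n ih =>
    have thetaTerm_neg_succ :
        thetaTerm z q (-n) = thetaTerm z q (-(n + 1 : ℕ)) * (-z) / q ^ (n + 1) := by
      rw [← neg_add_cancel_right (-(n : ℤ)) 1, ← neg_add, ← Nat.cast_succ, thetaTerm_add_one hz hq,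
        zpow_neg, zpow_natCast, div_eq_mul_inv]
    have mul_base : z / q ^ (n + 1) * q = z / q ^ n := by
      rw [pow_succ, div_mul_eq_mul_div, mul_div_mul_right _ _ hq]
    rw [finQPoch_succ', mul_base, finQPoch_succ, ← ih, thetaTerm_neg_succ]
    field_simp
    ring

/-- A finite form of Jacobi's triple product identity: the `q`-binomial theorem, recentred. -/
theorem finQPoch_mul_finQPoch_eq_sum (hz : z ≠ 0) (hq : q ≠ 0) (n : ℕ) :
    finQPoch z q n * finQPoch (q / z) q n =
      ∑ m ∈ Icc (-n : ℤ) n, gaussBinom q (2 * n) (m + n).toNat * thetaTerm z q m := by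
  have finQPoch_two_mul :
      finQPoch (z / q ^ n) q (2 * n) = finQPoch (z / q ^ n) q n * finQPoch z q n := by
    rw [two_mul, finQPoch_add, div_mul_cancel₀ _ (pow_ne_zero n hq)]
  have thetaTerm_sub (j : ℕ) : thetaTerm z q (j - n) =
      thetaTerm z q (-n) * (q ^ j.choose 2 * (-(z / q ^ n)) ^ j) := by
    rw [sub_eq_add_neg, thetaTerm_add hz hq, thetaTerm_natCast, mul_neg, zpow_neg,
      mul_comm (j : ℤ), zpow_mul, zpow_natCast, zpow_natCast, ← neg_div, div_pow]
    ring
  calc finQPoch z q n * finQPoch (q / z) q n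
      = thetaTerm z q (-n) * finQPoch (z / q ^ n) q (2 * n) := by
        rw [← thetaTerm_neg_natCast_mul_finQPoch hz hq, finQPoch_two_mul]; ring
    _ = ∑ j ∈ range (2 * n + 1), gaussBinom q (2 * n) j * thetaTerm z q (j - n) := by
        rw [finQPoch_eq_sum_gaussBinom, mul_sum]
        exact sum_congr rfl fun j _ ↦ by rw [thetaTerm_sub]; ring
    _ = _ := by
        refine sum_nbij' (fun j ↦ j - n) (fun m ↦ (m + n).toNat) ?_ ?_ ?_ ?_ ?_ <;>
          simp +contextual <;> lia

end ThetaTerm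

lemma prod_one_sub_pow_mul_of_isPrimitiveRoot {R : Type*} [CommRing R] [IsDomain R] {ζ : R}
    {k : ℕ} [NeZero k] (hζ : IsPrimitiveRoot ζ k) (a : R) :
    ∏ j ∈ range k, (1 - ζ ^ j * a) = 1 - a ^ k := by
  have hk := NeZero.pos k
  rw [← one_pow k, hζ.pow_sub_pow_eq_prod_sub_mul 1 a hk]
  refine prod_nbij (ζ ^ ·) (fun j _ ↦ ?_) hζ.injOn_pow (fun η hη ↦ ?_) fun j _ ↦ by rw [one_pow]
  · rw [Polynomial.mem_nthRootsFinset hk, pow_right_comm, hζ.pow_eq_one, one_pow]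
  · obtain ⟨j, hj, rfl⟩ :=
      hζ.eq_pow_of_pow_eq_one ((Polynomial.mem_nthRootsFinset hk 1).1 hη)
    exact ⟨j, mem_coe.2 (mem_range.2 hj), rfl⟩

lemma pow_mul_pow_mul_of_isPrimitiveRoot {R : Type*} [CommRing R] {ζ : R} {k : ℕ}
    (hζ : IsPrimitiveRoot ζ k) (a : R) (j m : ℕ) : (ζ ^ j * a) ^ (k * m) = a ^ (k * m) := by
  rw [pow_mul, mul_pow, pow_right_comm, hζ.pow_eq_one, one_pow, one_mul, pow_mul]

lemma norm_pow_mul_of_isPrimitiveRoot {𝕜 : Type*} [NormedField 𝕜] {ζ : 𝕜} {k : ℕ} [NeZero k]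
    (hζ : IsPrimitiveRoot ζ k) (a : 𝕜) (j : ℕ) : ‖ζ ^ j * a‖ = ‖a‖ := by
  rw [norm_mul, norm_pow, (hζ.isOfFinOrder (NeZero.ne k)).norm_eq_one, one_pow,
    one_mul]

section NormedField

variable {𝕜 : Type*} [NormedField 𝕜] {q : 𝕜}

lemma norm_pow_lt_one (hq : ‖q‖ < 1) {k : ℕ} (hk : k ≠ 0) : ‖q ^ k‖ < 1 := by
  rw [norm_pow]; exact pow_lt_one₀ (norm_nonneg q) hq hk

lemma one_sub_self_mul_pow_ne_zero (hq : ‖q‖ < 1) (n : ℕ) : 1 - q * q ^ n ≠ 0 := by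
  intro h
  have h₁ := norm_pow_lt_one hq n.succ_ne_zero
  rw [pow_succ', ← sub_eq_zero.1 h, norm_one] at h₁
  exact h₁.false

lemma finQPoch_self_ne_zero (hq : ‖q‖ < 1) (n : ℕ) : finQPoch q q n ≠ 0 :=
  prod_ne_zero_iff.2 fun i _ ↦ one_sub_self_mul_pow_ne_zero hq i

lemma gaussBinom_add_left (hq : ‖q‖ < 1) (m n : ℕ) :
    gaussBinom q (m + n) m =
      finQPoch q q (m + n) * (finQPoch q q m)⁻¹ * (finQPoch q q n)⁻¹ := by
  rw [← gaussBinom_mul_finQPoch_mul_finQPoch q m n]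
  field_simp [finQPoch_self_ne_zero hq]

lemma summable_norm_neg_mul_pow (a : 𝕜) (hq : ‖q‖ < 1) :
    Summable fun n : ℕ ↦ ‖-(a * q ^ n)‖ := by
  simpa only [norm_neg, norm_mul, norm_pow] using
    (summable_geometric_of_lt_one (norm_nonneg q) hq).mul_left ‖a‖

end NormedField

/-- Euler's product `(q; q)_∞`. -/
noncomputable def eulerFun (q : ℂ) : ℂ := qPoch q q

section InfiniteProducts

variable {q : ℂ}

lemma multipliable_one_sub_mul_pow (a : ℂ) (hq : ‖q‖ < 1) :
    Multipliable fun n : ℕ ↦ 1 - a * q ^ n := by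
  simpa only [sub_eq_add_neg] using
    multipliable_one_add_of_summable (summable_norm_neg_mul_pow a hq)

lemma tendsto_finQPoch (a : ℂ) (hq : ‖q‖ < 1) :
    Tendsto (finQPoch a q) atTop (𝓝 (qPoch a q)) :=
  (multipliable_one_sub_mul_pow a hq).tendsto_prod_tprod_nat

lemma tendsto_finQPoch_self (hq : ‖q‖ < 1) :
    Tendsto (finQPoch q q) atTop (𝓝 (eulerFun q)) :=
  tendsto_finQPoch q hq

lemma eulerFun_ne_zero (hq : ‖q‖ < 1) : eulerFun q ≠ 0 := by
  simp only [eulerFun, qPoch, sub_eq_add_neg]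
  refine tprod_one_add_ne_zero_of_summable (fun n ↦ ?_) (summable_norm_neg_mul_pow q hq)
  simpa only [sub_eq_add_neg] using one_sub_self_mul_pow_ne_zero hq n

lemma qPoch_eq_prod_qPoch_pow (a : ℂ) (hq : ‖q‖ < 1) (k : ℕ) [NeZero k] :
    qPoch a q = ∏ r ∈ range k, qPoch (a * q ^ r) (q ^ k) := by
  have hqk := norm_pow_lt_one hq (NeZero.ne k)
  have h := (tendsto_finQPoch a hq).comp (tendsto_id.const_mul_atTop' (NeZero.pos k))
  refine tendsto_nhds_unique h ((tendsto_finsetProd _ fun r _ ↦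
    tendsto_finQPoch (a * q ^ r) hqk).congr fun n ↦ ?_)
  induction n with
  | zero => simp
  | succ n ih =>
    simp only [finQPoch_succ, prod_mul_distrib, ih, Function.comp_apply, id, mul_add_one,
      finQPoch_add]
    congr 1
    exact prod_congr rfl fun i _ ↦ by ring

lemma eulerFun_eq_prod_qPoch_mul_eulerFun (hq : ‖q‖ < 1) (k : ℕ) :
    eulerFun q =
      (∏ r ∈ range k, qPoch (q ^ (r + 1)) (q ^ (k + 1))) * eulerFun (q ^ (k + 1)) := by
  rw [eulerFun, qPoch_eq_prod_qPoch_pow q hq (k + 1), prod_range_succ, eulerFun]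
  simp only [pow_succ']

lemma qPoch_eq_one_sub_mul (a : ℂ) (hq : ‖q‖ < 1) : qPoch a q = (1 - a) * qPoch (a * q) q := by
  refine tendsto_nhds_unique ((tendsto_finQPoch a hq).comp (tendsto_add_atTop_nat 1)) ?_
  simpa only [Function.comp_def, finQPoch_succ'] using (tendsto_finQPoch (a * q) hq).const_mul _

lemma prod_qPoch_of_isPrimitiveRoot {ζ : ℂ} {k : ℕ} [NeZero k] (hζ : IsPrimitiveRoot ζ k)
    (a : ℂ) (hq : ‖q‖ < 1) :
    ∏ j ∈ range k, qPoch (ζ ^ j * a) q = qPoch (a ^ k) (q ^ k) := by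
  have hqk := norm_pow_lt_one hq (NeZero.ne k)
  refine tendsto_nhds_unique (tendsto_finsetProd _ fun j _ ↦ tendsto_finQPoch (ζ ^ j * a) hq)
    ((tendsto_finQPoch (a ^ k) hqk).congr fun n ↦ ?_)
  simp only [finQPoch]
  rw [Finset.prod_comm]
  refine prod_congr rfl fun i _ ↦ ?_
  simp only [mul_assoc, prod_one_sub_pow_mul_of_isPrimitiveRoot hζ, mul_pow, pow_right_comm q]

end InfiniteProducts

section SummableThetaTerm

variable {𝕜 : Type*} [NormedField 𝕜] [CompleteSpace 𝕜] {z q : 𝕜}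

lemma summable_thetaTerm_natCast (hz : z ≠ 0) (hq₀ : q ≠ 0) (hq : ‖q‖ < 1) :
    Summable fun n : ℕ ↦ thetaTerm z q n := by
  refine summable_of_ratio_test_tendsto_lt_one zero_lt_one
    (.of_forall fun n ↦ thetaTerm_ne_zero hz hq₀ n) ?_
  have ratio (n : ℕ) :
      ‖thetaTerm z q (n + 1 : ℕ)‖ / ‖thetaTerm z q n‖ = ‖z‖ * ‖q‖ ^ n := by
    rw [div_eq_iff (norm_ne_zero_iff.2 (thetaTerm_ne_zero hz hq₀ n)), Nat.cast_succ,
      thetaTerm_add_one hz hq₀, norm_mul, norm_mul, norm_neg, zpow_natCast, norm_pow]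
    ring
  simpa only [ratio, mul_zero] using
    (tendsto_pow_atTop_nhds_zero_of_lt_one (norm_nonneg q) hq).const_mul ‖z‖

lemma summable_thetaTerm (hz : z ≠ 0) (hq₀ : q ≠ 0) (hq : ‖q‖ < 1) :
    Summable (thetaTerm z q) := by
  refine .of_nat_of_neg (summable_thetaTerm_natCast hz hq₀ hq) ?_
  simp only [thetaTerm_neg hq₀]
  exact summable_thetaTerm_natCast (div_ne_zero hq₀ hz) hq₀ hq

end SummableThetaTerm

section JacobiTripleProduct

variable {z q : ℂ}

lemma exists_norm_gaussBinom_le (hq : ‖q‖ < 1) : ∃ C, ∀ n k, ‖gaussBinom q n k‖ ≤ C := by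
  have hF := tendsto_finQPoch_self hq
  obtain ⟨A, hA⟩ := hF.norm.bddAbove_range
  obtain ⟨B, hB⟩ := (hF.inv₀ (eulerFun_ne_zero hq)).norm.bddAbove_range
  simp only [mem_upperBounds, Set.forall_mem_range, norm_inv] at hA hB
  have hA₀ : 0 ≤ A := (norm_nonneg _).trans (hA 0)
  refine ⟨A * B * B, fun n k ↦ ?_⟩
  have hB₀ : 0 ≤ B := (inv_nonneg.2 (norm_nonneg _)).trans (hB 0)
  rcases lt_or_ge n k with h | h
  · rw [gaussBinom_eq_zero_of_lt q h, norm_zero]; positivity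
  · obtain ⟨m, rfl⟩ := Nat.exists_eq_add_of_le h
    rw [gaussBinom_add_left hq, norm_mul, norm_mul, norm_inv, norm_inv]
    gcongr
    exacts [hA _, hB _, hB _]

lemma tendsto_gaussBinom_central (hq : ‖q‖ < 1) (m : ℤ) :
    Tendsto (fun n : ℕ ↦ gaussBinom q (2 * n) (m + n).toNat) atTop (𝓝 (eulerFun q)⁻¹) := by
  have hF := tendsto_finQPoch_self hq
  have hE := eulerFun_ne_zero hq
  have toNat_add (m : ℤ) : Tendsto (fun n : ℕ ↦ (m + n).toNat) atTop atTop :=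
    tendsto_atTop_atTop.2 fun b ↦ ⟨b + m.natAbs, fun n hn ↦ by lia⟩
  have h := ((hF.comp (tendsto_id.const_mul_atTop' two_pos)).mul
    ((hF.comp (toNat_add m)).inv₀ hE)).mul ((hF.comp (toNat_add (-m))).inv₀ hE)
  rw [mul_inv_cancel₀ hE, one_mul] at h
  refine h.congr' ((eventually_ge_atTop m.natAbs).mono fun n hn ↦ ?_)
  have two_mul_n : 2 * n = (m + n).toNat + (-m + n).toNat := by lia
  simp only [Function.comp_apply, id, two_mul_n, gaussBinom_add_left hq]

/-- The theta product `(z; q)_∞ (q / z; q)_∞ (q; q)_∞` of Jacobi's triple product identity. -/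
noncomputable def theta (z q : ℂ) : ℂ := qPoch z q * qPoch (q / z) q * eulerFun q

/-- **Jacobi's triple product identity**. -/
theorem hasSum_thetaTerm (hz : z ≠ 0) (hq₀ : q ≠ 0) (hq : ‖q‖ < 1) :
    HasSum (thetaTerm z q) (theta z q) := by
  have hs := summable_thetaTerm hz hq₀ hq
  obtain ⟨C, hC⟩ := exists_norm_gaussBinom_le hq
  have tendsto_tsum : Tendsto (fun n : ℕ ↦ finQPoch z q n * finQPoch (q / z) q n) atTop
      (𝓝 (∑' m, (eulerFun q)⁻¹ * thetaTerm z q m)) := by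
    simp only [finQPoch_mul_finQPoch_eq_sum hz hq₀,
      fun f s ↦ sum_eq_tsum_indicator (α := ℂ) (β := ℤ) f s]
    refine tendsto_tsum_of_dominated_convergence (hs.norm.mul_left C) (fun m ↦ ?_)
      (.of_forall fun n m ↦ ?_)
    · refine ((tendsto_gaussBinom_central hq m).mul_const _).congr'
        ((eventually_ge_atTop m.natAbs).mono fun n hn ↦ (Set.indicator_of_mem ?_ _).symm)
      simp only [coe_Icc, Set.mem_Icc]
      lia
    · refine (norm_indicator_le_norm_self _ _).trans ?_
      rw [norm_mul]
      gcongr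
      exact hC _ _
  have h := tendsto_nhds_unique tendsto_tsum ((tendsto_finQPoch z hq).mul (tendsto_finQPoch _ hq))
  rw [tsum_mul_left, inv_mul_eq_iff_eq_mul₀ (eulerFun_ne_zero hq), mul_comm] at h
  rw [theta, ← h]
  exact hs.hasSum

end JacobiTripleProduct

section Theta

variable {z q : ℂ}

lemma theta_div (hq₀ : q ≠ 0) : theta (q / z) q = theta z q := by
  rw [theta, theta, div_div_cancel₀ hq₀, mul_comm (qPoch (q / z) q)]

lemma mul_theta_mul_self (hz : z ≠ 0) (hq₀ : q ≠ 0) (hq : ‖q‖ < 1) :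
    z * theta (z * q) q = -theta z q := by
  have h : q / (z * q) = z⁻¹ := by field_simp
  rw [theta, theta, h, qPoch_eq_one_sub_mul z hq, qPoch_eq_one_sub_mul z⁻¹ hq, ← div_eq_inv_mul]
  field_simp
  ring

lemma eq_sum_of_hasSum_int_mul_add {M : Type*} [AddCommMonoid M] [TopologicalSpace M] [T3Space M]
    [ContinuousAdd M] {f : ℤ → M} {a : M} (ha : HasSum f a) {k : ℕ} [NeZero k] {b : ℕ → M}
    (hb : ∀ r < k, HasSum (fun m : ℤ ↦ f (k * m + r)) (b r)) : a = ∑ r ∈ range k, b r := by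
  let e : Fin k × ℤ ≃ ℤ := (Equiv.prodComm _ _).trans (Int.divModEquiv k).symm
  have h : HasSum (fun r : Fin k ↦ b r) a := by
    refine (e.hasSum_iff.2 ha).prod_fiberwise fun r ↦ ?_
    simpa [e, mul_comm] using hb r r.2
  rw [h.unique (hasSum_fintype _), Fin.sum_univ_eq_sum_range]

theorem theta_dissection (hz : z ≠ 0) (hq₀ : q ≠ 0) (hq : ‖q‖ < 1) (k : ℕ) [NeZero k] :
    theta z q = ∑ r ∈ range k,
      thetaTerm z q r * theta (-((-z) ^ k * q ^ (k.choose 2 + k * r))) (q ^ k ^ 2) := by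
  refine eq_sum_of_hasSum_int_mul_add (hasSum_thetaTerm hz hq₀ hq) fun r _ ↦ ?_
  simp only [thetaTerm_natCast_mul_add hz hq₀]
  refine (hasSum_thetaTerm ?_ (pow_ne_zero _ hq₀)
    (norm_pow_lt_one hq (pow_ne_zero 2 (NeZero.ne k)))).mul_left _
  exact neg_ne_zero.2 (mul_ne_zero (pow_ne_zero k (neg_ne_zero.2 hz)) (pow_ne_zero _ hq₀))

theorem theta_self_sq_dissection (hq₀ : q ≠ 0) (hq : ‖q‖ < 1) :
    theta q (q ^ 2) = theta (q ^ 9) (q ^ 18) - 2 * q * theta (q ^ 3) (q ^ 18) := by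
  have dissection : theta q (q ^ 2) = theta (q ^ 9) (q ^ 18) - q * theta (q ^ 15) (q ^ 18) +
      q ^ 4 * theta (q ^ 21) (q ^ 18) := by
    rw [theta_dissection hq₀ (pow_ne_zero 2 hq₀) (norm_pow_lt_one hq two_ne_zero) 3]
    simp only [sum_range_succ, sum_range_zero, thetaTerm_natCast, Nat.choose]
    ring_nf
  have reflection : theta (q ^ 15) (q ^ 18) = theta (q ^ 3) (q ^ 18) := by
    rw [← theta_div (pow_ne_zero 18 hq₀), show q ^ 18 / q ^ 15 = q ^ 3 by field_simp]
  have shift : q ^ 3 * theta (q ^ 21) (q ^ 18) = -theta (q ^ 3) (q ^ 18) := by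
    rw [← mul_theta_mul_self (pow_ne_zero 3 hq₀) (pow_ne_zero 18 hq₀)
      (norm_pow_lt_one hq (by norm_num)), ← pow_add]
  linear_combination dissection - q * reflection + q * shift

theorem theta_neg_self_dissection (hq₀ : q ≠ 0) (hq : ‖q‖ < 1) :
    theta (-q) q = 2 * theta (-q ^ 3) (q ^ 9) + q * theta (-q ^ 9) (q ^ 9) := by
  have dissection : theta (-q) q = theta (-q ^ 6) (q ^ 9) + q * theta (-q ^ 9) (q ^ 9) +
      q ^ 3 * theta (-q ^ 12) (q ^ 9) := by
    rw [theta_dissection (neg_ne_zero.2 hq₀) hq₀ hq 3]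
    simp only [sum_range_succ, sum_range_zero, thetaTerm_natCast, Nat.choose]
    ring_nf
  have reflection : theta (-q ^ 6) (q ^ 9) = theta (-q ^ 3) (q ^ 9) := by
    rw [← theta_div (pow_ne_zero 9 hq₀), div_neg, show q ^ 9 / q ^ 6 = q ^ 3 by field_simp]
  have shift : q ^ 3 * theta (-q ^ 12) (q ^ 9) = theta (-q ^ 3) (q ^ 9) := by
    rw [← neg_inj, ← mul_theta_mul_self (neg_ne_zero.2 (pow_ne_zero 3 hq₀)) (pow_ne_zero 9 hq₀)
      (norm_pow_lt_one hq (by norm_num)), neg_mul, neg_mul, ← pow_add]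
  linear_combination dissection + reflection + shift

end Theta

section EulerFun

variable {q : ℂ}

lemma eulerFun_eq_qPoch_mul_two (hq : ‖q‖ < 1) :
    eulerFun q = qPoch q (q ^ 2) * eulerFun (q ^ 2) := by
  simpa [prod_range_succ] using eulerFun_eq_prod_qPoch_mul_eulerFun hq 1

lemma eulerFun_eq_qPoch_mul_three (hq : ‖q‖ < 1) :
    eulerFun q = qPoch q (q ^ 3) * qPoch (q ^ 2) (q ^ 3) * eulerFun (q ^ 3) := by
  simpa [prod_range_succ] using eulerFun_eq_prod_qPoch_mul_eulerFun hq 2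

lemma qPoch_sq_eq_div (hq : ‖q‖ < 1) : qPoch q (q ^ 2) = eulerFun q / eulerFun (q ^ 2) :=
  eq_div_of_mul_eq (eulerFun_ne_zero (norm_pow_lt_one hq two_ne_zero))
    (eulerFun_eq_qPoch_mul_two hq).symm

lemma qPoch_mul_qPoch_neg (a : ℂ) (hq : ‖q‖ < 1) :
    qPoch a q * qPoch (-a) q = qPoch (a ^ 2) (q ^ 2) := by
  simpa [prod_range_succ] using
    prod_qPoch_of_isPrimitiveRoot (IsPrimitiveRoot.neg_one 0 (by norm_num)) a hq

lemma theta_self_sq_mul_eulerFun (hq₀ : q ≠ 0) (hq : ‖q‖ < 1) :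
    theta q (q ^ 2) * eulerFun (q ^ 2) = eulerFun q ^ 2 := by
  rw [theta, eulerFun_eq_qPoch_mul_two hq, pow_two q, mul_div_cancel_right₀ q hq₀]
  ring

lemma theta_neg_self_mul_eulerFun (hq₀ : q ≠ 0) (hq : ‖q‖ < 1) :
    theta (-q) q * eulerFun q = 2 * eulerFun (q ^ 2) ^ 2 := by
  have qPoch_neg_one : qPoch (-1) q = 2 * qPoch (-q) q := by
    rw [qPoch_eq_one_sub_mul (-1) hq, neg_one_mul]; norm_num
  have eulerFun_sq : qPoch q q * qPoch (-q) q = qPoch (q ^ 2) (q ^ 2) := qPoch_mul_qPoch_neg q hq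
  rw [theta, div_neg, div_self hq₀, qPoch_neg_one, eulerFun, eulerFun, ← eulerFun_sq]
  ring

lemma theta_self_pow_six_mul_eulerFun (hq₀ : q ≠ 0) (hq : ‖q‖ < 1) :
    theta q (q ^ 6) * eulerFun (q ^ 2) * eulerFun (q ^ 3) = eulerFun q * eulerFun (q ^ 6) ^ 2 := by
  have h₁ : eulerFun q = qPoch q (q ^ 6) * qPoch (q ^ 2) (q ^ 6) * qPoch (q ^ 3) (q ^ 6) *
      qPoch (q ^ 4) (q ^ 6) * qPoch (q ^ 5) (q ^ 6) * eulerFun (q ^ 6) := by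
    simpa [prod_range_succ] using eulerFun_eq_prod_qPoch_mul_eulerFun hq 5
  have h₂ := eulerFun_eq_qPoch_mul_three (norm_pow_lt_one hq two_ne_zero)
  have h₃ := eulerFun_eq_qPoch_mul_two (norm_pow_lt_one hq three_ne_zero)
  simp only [← pow_mul, Nat.reduceMul] at h₂ h₃
  rw [theta, h₁, h₂, h₃, show q ^ 6 / q = q ^ 5 by field_simp]
  ring

lemma theta_neg_self_cube_mul_eulerFun (hq₀ : q ≠ 0) (hq : ‖q‖ < 1) :
    theta (-q) (q ^ 3) * eulerFun q * eulerFun (q ^ 6) =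
      eulerFun (q ^ 2) * eulerFun (q ^ 3) ^ 2 := by
  have h₂ := eulerFun_eq_qPoch_mul_three (norm_pow_lt_one hq two_ne_zero)
  have n₁ := qPoch_mul_qPoch_neg q (norm_pow_lt_one hq three_ne_zero)
  have n₂ := qPoch_mul_qPoch_neg (q ^ 2) (norm_pow_lt_one hq three_ne_zero)
  simp only [← pow_mul, Nat.reduceMul] at h₂ n₁ n₂
  rw [theta, h₂, eulerFun_eq_qPoch_mul_three hq, ← n₁, ← n₂, div_neg,
    show q ^ 3 / q = q ^ 2 by field_simp]
  ring

theorem prod_eulerFun_of_isPrimitiveRoot {p : ℕ} (hp : p.Prime) {ζ : ℂ}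
    (hζ : IsPrimitiveRoot ζ p) (hq : ‖q‖ < 1) :
    (∏ j ∈ range p, eulerFun (ζ ^ j * q)) * eulerFun (q ^ p ^ 2) = eulerFun (q ^ p) ^ (p + 1) := by
  obtain ⟨n, rfl⟩ := Nat.exists_eq_add_one_of_ne_zero hp.ne_zero
  have hqp := norm_pow_lt_one hq hp.ne_zero
  have norm_lt (j : ℕ) : ‖ζ ^ j * q‖ < 1 := (norm_pow_mul_of_isPrimitiveRoot hζ q j).trans_lt hq
  have split (j : ℕ) : eulerFun (ζ ^ j * q) =
      (∏ r ∈ range n, qPoch ((ζ ^ (r + 1)) ^ j * q ^ (r + 1)) (q ^ (n + 1))) *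
        eulerFun (q ^ (n + 1)) := by
    simp only [eulerFun_eq_prod_qPoch_mul_eulerFun (norm_lt j) n, mul_pow, pow_right_comm ζ j,
      hζ.pow_eq_one, one_pow, one_mul]
  have prod_residue {r : ℕ} (hr : r ∈ range n) :
      ∏ j ∈ range (n + 1), qPoch ((ζ ^ (r + 1)) ^ j * q ^ (r + 1)) (q ^ (n + 1)) =
        qPoch ((q ^ (n + 1)) ^ (r + 1)) ((q ^ (n + 1)) ^ (n + 1)) := by
    have hrp := Nat.coprime_of_lt_prime r.succ_ne_zero (Nat.succ_lt_succ (mem_range.1 hr)) hp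
    rw [prod_qPoch_of_isPrimitiveRoot (hζ.pow_of_coprime (r + 1) hrp.symm) _ hqp,
      pow_right_comm q]
  simp only [split, prod_mul_distrib, prod_const, card_range]
  rw [Finset.prod_comm, prod_congr rfl fun r ↦ prod_residue, pow_succ _ (n + 1), pow_two, pow_mul,
    mul_right_comm, ← eulerFun_eq_prod_qPoch_mul_eulerFun hqp n, mul_comm]

end EulerFun

section CubicDissection

variable {q : ℂ}

lemma theta_self_sq_mul_theta_neg_self (hq₀ : q ≠ 0) (hq : ‖q‖ < 1) :
    theta q (q ^ 2) * theta (-q) q = 2 * eulerFun q * eulerFun (q ^ 2) := by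
  have h₁ := eulerFun_ne_zero hq
  have h₂ := eulerFun_ne_zero (norm_pow_lt_one hq two_ne_zero)
  refine mul_right_cancel₀ (mul_ne_zero h₁ h₂) ?_
  linear_combination theta (-q) q * eulerFun q * theta_self_sq_mul_eulerFun hq₀ hq +
    eulerFun q ^ 2 * theta_neg_self_mul_eulerFun hq₀ hq

lemma theta_self_pow_six_mul_theta_neg_self_cube (hq₀ : q ≠ 0) (hq : ‖q‖ < 1) :
    theta q (q ^ 6) * theta (-q) (q ^ 3) = eulerFun (q ^ 3) * eulerFun (q ^ 6) := by
  have h₁ := eulerFun_ne_zero hq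
  have h₂ := eulerFun_ne_zero (norm_pow_lt_one hq two_ne_zero)
  have h₃ := eulerFun_ne_zero (norm_pow_lt_one hq three_ne_zero)
  have h₆ := eulerFun_ne_zero (norm_pow_lt_one hq (k := 6) (by norm_num))
  refine mul_right_cancel₀ (mul_ne_zero (mul_ne_zero h₁ h₂) (mul_ne_zero h₃ h₆)) ?_
  linear_combination
    theta (-q) (q ^ 3) * eulerFun q * eulerFun (q ^ 6) * theta_self_pow_six_mul_eulerFun hq₀ hq +
      eulerFun q * eulerFun (q ^ 6) ^ 2 * theta_neg_self_cube_mul_eulerFun hq₀ hq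

/-- Obtained by multiplying the dissections of the two factors in
`theta_self_sq_mul_theta_neg_self`. -/
theorem eulerFun_mul_eulerFun_sq_dissection (hq₀ : q ≠ 0) (hq : ‖q‖ < 1) :
    eulerFun q * eulerFun (q ^ 2) =
      theta (q ^ 9) (q ^ 18) * theta (-q ^ 3) (q ^ 9) - q * (eulerFun (q ^ 9) * eulerFun (q ^ 18)) -
        q ^ 2 * (theta (q ^ 3) (q ^ 18) * theta (-q ^ 9) (q ^ 9)) := by
  have h₁ := theta_self_sq_mul_theta_neg_self hq₀ hq
  have h₃ := theta_self_pow_six_mul_theta_neg_self_cube (pow_ne_zero 3 hq₀)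
    (norm_pow_lt_one hq three_ne_zero)
  have h₉ := theta_self_sq_mul_theta_neg_self (pow_ne_zero 9 hq₀)
    (norm_pow_lt_one hq (by norm_num))
  simp only [← pow_mul, Nat.reduceMul] at h₃ h₉
  rw [theta_self_sq_dissection hq₀ hq, theta_neg_self_dissection hq₀ hq] at h₁
  linear_combination (-h₁ + q * h₉ - 4 * q * h₃) / 2

/-- Up to sign and with `q` for `q³`, the product of the two outer coefficients in
`eulerFun_mul_eulerFun_sq_dissection`: it is `2` times the square of the middle one. -/
lemma theta_outer_mul_theta_outer (hq₀ : q ≠ 0) (hq : ‖q‖ < 1) :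
    theta (q ^ 3) (q ^ 6) * theta (-q) (q ^ 3) * (theta q (q ^ 6) * theta (-q ^ 3) (q ^ 3)) =
      2 * (eulerFun (q ^ 3) * eulerFun (q ^ 6)) ^ 2 := by
  have h₁ := theta_self_pow_six_mul_theta_neg_self_cube hq₀ hq
  have h₃ := theta_self_sq_mul_theta_neg_self (pow_ne_zero 3 hq₀)
    (norm_pow_lt_one hq three_ne_zero)
  simp only [← pow_mul, Nat.reduceMul] at h₃
  linear_combination theta (q ^ 3) (q ^ 6) * theta (-q ^ 3) (q ^ 3) * h₁ +
    eulerFun (q ^ 3) * eulerFun (q ^ 6) * h₃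

end CubicDissection

lemma sum_pow_div_of_isPrimitiveRoot_three {K : Type*} [Field K] {ω : K}
    (hω : IsPrimitiveRoot ω 3) (a b c u : K) {f : ℕ → K}
    (hf : ∀ j, f j = a + ω ^ j * u * b + (ω ^ j * u) ^ 2 * c) (hf₀ : ∀ j, f j ≠ 0) :
    ∑ j ∈ range 3, ω ^ j / f j = 3 * u ^ 2 * (b ^ 2 - a * c) / ∏ j ∈ range 3, f j := by
  have cyclotomic : 1 + ω + ω ^ 2 = 0 := by
    simpa [sum_range_succ] using hω.geom_sum_eq_zero (by norm_num)
  have h₀ := hf₀ 0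
  have h₁ := hf₀ 1
  have h₂ := hf₀ 2
  simp only [sum_range_succ, prod_range_succ, sum_range_zero, prod_range_zero, zero_add, one_mul]
  field_simp
  rw [hf 0, hf 1, hf 2]
  linear_combination
    (a ^ 2 + 2 * a * b * ω * u + 3 * a * c * u ^ 2 + 2 * b * c * ω ^ 3 * u ^ 3 +
      c ^ 2 * ω ^ 4 * u ^ 4) * cyclotomic +
    (a * c * u ^ 2 * (2 * ω + ω ^ 2) + 3 * b ^ 2 * u ^ 2) * hω.pow_eq_one

section PowerSeriesValue

open PowerSeries
open scoped PowerSeries.WithPiTopology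

variable {𝕜 : Type*} [RCLike 𝕜] {f g : ℕ⟦X⟧} {q a b : 𝕜}

/-- The power series `f`, with natural number coefficients, converges at `q` to the value `a`. -/
def HasValue (f : ℕ⟦X⟧) (q a : 𝕜) : Prop := HasSum (fun n ↦ (f.coeff n : 𝕜) * q ^ n) a

lemma tendsto_coeff_mul_pow {ι : Type*} {l : Filter ι} {F : ι → ℕ⟦X⟧} (hF : Tendsto F l (𝓝 f))
    (q : 𝕜) (n : ℕ) : Tendsto (fun i ↦ ((F i).coeff n : 𝕜) * q ^ n) l (𝓝 (f.coeff n * q ^ n)) :=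
  ((continuous_of_discreteTopology.tendsto _).comp
    ((WithPiTopology.tendsto_iff_coeff_tendsto _ _ _ _).1 hF n)).mul_const _

namespace HasValue

lemma one (q : 𝕜) : HasValue 1 q 1 :=
  (hasSum_ite_eq 0 (1 : 𝕜)).congr_fun fun n ↦ by
    rw [coeff_one]; split_ifs with h <;> simp [h]

lemma add (hf : HasValue f q a) (hg : HasValue g q b) : HasValue (f + g) q (a + b) := by
  simpa [HasValue, add_mul] using HasSum.add hf hg

lemma mul (hf : HasValue f q a) (hg : HasValue g q b) : HasValue (f * g) q (a * b) := by
  have coeff_mul_pow (n : ℕ) : ((f * g).coeff n : 𝕜) * q ^ n = ∑ p ∈ antidiagonal n,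
      (f.coeff p.1 : 𝕜) * q ^ p.1 * ((g.coeff p.2 : 𝕜) * q ^ p.2) := by
    rw [coeff_mul, Nat.cast_sum, sum_mul]
    refine sum_congr rfl fun p hp ↦ ?_
    rw [← mem_antidiagonal.1 hp]
    push_cast
    ring
  have hf' := hf.summable.norm
  have hg' := hg.summable.norm
  simp only [HasValue, coeff_mul_pow]
  rw [← hf.tsum_eq, ← hg.tsum_eq,
    tsum_mul_tsum_eq_tsum_sum_antidiagonal_of_summable_norm hf' hg']
  exact (summable_norm_sum_mul_antidiagonal_of_summable_norm hf' hg').of_norm.hasSum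

lemma prod {ι : Type*} {s : Finset ι} {f : ι → ℕ⟦X⟧} {a : ι → 𝕜}
    (h : ∀ i ∈ s, HasValue (f i) q (a i)) : HasValue (∏ i ∈ s, f i) q (∏ i ∈ s, a i) := by
  induction s using Finset.cons_induction with
  | empty => exact one q
  | cons i s _ ih =>
    rw [prod_cons, prod_cons]
    exact (h i (mem_cons_self i s)).mul (ih fun j hj ↦ h j (mem_cons_of_mem hj))

lemma norm_le {r : ℝ} (hf : HasValue f q a) (hr : HasValue f ‖q‖ r) : ‖a‖ ≤ r :=
  hf.norm_le_of_bounded hr fun n ↦ by simp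

lemma sum_range_le {r b : ℝ} (hr : 0 ≤ r) (hf : HasValue f r b) (n : ℕ) :
    ∑ k ∈ range n, (f.coeff k : ℝ) * r ^ k ≤ b :=
  sum_le_hasSum _ (fun _ _ ↦ by positivity) hf

/-- The bound on the values at `‖q‖` makes the series of the limit converge there, and that series
dominates those of all `F N` at `q`. -/
lemma of_tendsto {F : ℕ → ℕ⟦X⟧} {a : ℕ → 𝕜} {A : 𝕜} {b : ℕ → ℝ} {c : ℝ}
    (hmono : ∀ n, Monotone fun N ↦ (F N).coeff n) (hF : Tendsto F atTop (𝓝 f))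
    (ha : ∀ N, HasValue (F N) q (a N)) (hA : Tendsto a atTop (𝓝 A))
    (hb : ∀ N, HasValue (F N) ‖q‖ (b N)) (hc : ∀ N, b N ≤ c) : HasValue f q A := by
  have coeff_le (N n : ℕ) : (F N).coeff n ≤ f.coeff n :=
    (hmono n).ge_of_tendsto ((WithPiTopology.tendsto_iff_coeff_tendsto _ _ _ _).1 hF n) N
  have hs : Summable fun n ↦ (f.coeff n : ℝ) * ‖q‖ ^ n :=
    summable_of_sum_range_le (c := c) (fun n ↦ by positivity) fun n ↦
      le_of_tendsto' (tendsto_finsetSum _ fun k _ ↦ tendsto_coeff_mul_pow hF ‖q‖ k) fun N ↦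
        ((hb N).sum_range_le (norm_nonneg q) n).trans (hc N)
  have hle (N n : ℕ) : ‖((F N).coeff n : 𝕜) * q ^ n‖ ≤ f.coeff n * ‖q‖ ^ n := by
    rw [norm_mul, norm_pow, RCLike.norm_natCast]
    gcongr
    exact coeff_le N n
  have hlim := tendsto_tsum_of_dominated_convergence hs (fun n ↦ tendsto_coeff_mul_pow hF q n)
    (.of_forall hle)
  simp only [(ha _).tsum_eq] at hlim
  rw [tendsto_nhds_unique hA hlim]
  exact (Summable.of_norm (by simpa using hs)).hasSum

lemma of_hasProd_one_add {u : ℕ → ℕ⟦X⟧} {a : ℕ → 𝕜} {b : ℕ → ℝ}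
    (hf : HasProd (fun i ↦ 1 + u i) f) (ha : ∀ i, HasValue (u i) q (a i))
    (hb : ∀ i, HasValue (u i) ‖q‖ (b i)) (hs : Summable b) :
    HasValue f q (∏' i, (1 + a i)) := by
  have hab (i : ℕ) : ‖a i‖ ≤ b i := (ha i).norm_le (hb i)
  have hb₀ (i : ℕ) : 0 ≤ b i := (norm_nonneg _).trans (hab i)
  have ha' : Multipliable fun i ↦ 1 + a i :=
    multipliable_one_add_of_summable (hs.of_nonneg_of_le (fun _ ↦ norm_nonneg _) hab)
  refine of_tendsto (fun n ↦ monotone_nat_of_le_succ fun N ↦ ?_) hf.tendsto_prod_nat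
    (fun N ↦ prod fun i _ ↦ (one q).add (ha i)) ha'.tendsto_prod_tprod_nat
    (fun N ↦ prod fun i _ ↦ (one _).add (hb i))
    (fun N ↦ (Real.prod_one_add_le_exp_sum (range N) hb₀).trans
      (Real.exp_le_exp.2 (hs.sum_le_tsum _ fun i _ ↦ hb₀ i)))
  rw [prod_range_succ, mul_add, mul_one, map_add]
  exact Nat.le_add_right _ _

end HasValue

lemma hasValue_tsum_smul_X_pow {c e : ℕ → ℕ} (he : e.Injective)
    (hs : Summable fun j ↦ c j • (X : ℕ⟦X⟧) ^ e j) (ha : HasSum (fun j ↦ (c j : 𝕜) * q ^ e j) a) :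
    HasValue (∑' j, c j • (X : ℕ⟦X⟧) ^ e j) q a := by
  have coeff_tsum (n : ℕ) :
      (∑' j, c j • (X : ℕ⟦X⟧) ^ e j).coeff n = ∑' j, if n = e j then c j else 0 :=
    (hs.map_tsum _ (WithPiTopology.continuous_coeff ℕ n)).trans <| by
      simp only [map_nsmul, coeff_X_pow, smul_eq_mul, mul_ite, mul_one, mul_zero]
  refine (he.hasSum_iff fun n hn ↦ ?_).1 (ha.congr_fun fun j ↦ ?_)
  · have hn' (j : ℕ) : n ≠ e j := fun h ↦ hn ⟨j, h.symm⟩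
    rw [coeff_tsum]
    simp [hn']
  · rw [Function.comp_apply, coeff_tsum]
    simp [he.eq_iff]

section DesignatedSummands

lemma parts_eq_of_partition_two (p : Nat.Partition 2) : p.parts = {2} ∨ p.parts = {1, 1} := by
  have hsum := p.parts_sum
  have hcard : p.parts.card ≤ 2 := by
    simpa [hsum] using Multiset.card_nsmul_le_sum (a := 1) fun _ ↦ p.parts_pos
  interval_cases hc : p.parts.card
  · simp [Multiset.card_eq_zero.1 hc] at hsum
  · obtain ⟨a, ha⟩ := Multiset.card_eq_one.1 hc
    simp_all
  · obtain ⟨a, b, hab⟩ := Multiset.card_eq_two.1 hc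
    have ha : 0 < a := p.parts_pos (by simp [hab])
    have hb : 0 < b := p.parts_pos (by simp [hab])
    obtain ⟨rfl, rfl⟩ : a = 1 ∧ b = 1 := by
      simp only [hab, Multiset.insert_eq_cons, Multiset.sum_cons, Multiset.sum_singleton] at hsum
      lia
    exact .inr hab

lemma PD_two : PD 2 = 3 := by
  have univ_eq : (univ : Finset (Nat.Partition 2)) = {.indiscrete 2, .ofSums 2 {1, 1} rfl} := by
    symm
    refine eq_univ_of_forall fun p ↦ ?_
    rw [mem_insert, mem_singleton, Nat.Partition.ext_iff, Nat.Partition.ext_iff]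
    exact parts_eq_of_partition_two p
  have ne : Nat.Partition.indiscrete 2 ≠ .ofSums 2 {1, 1} rfl := by decide
  rw [PD, univ_eq, sum_pair ne]
  decide

lemma coeff_genFun_eq_PD (n : ℕ) :
    (Nat.Partition.genFun (R := ℕ) fun _ c ↦ c).coeff n = PD n := by
  rw [Nat.Partition.coeff_genFun, PD]
  exact sum_congr rfl fun p _ ↦ by simp [Finsupp.prod]

lemma hasValue_tsum_succ_smul_X_pow (hq : ‖q‖ < 1) (i : ℕ) :
    HasValue (∑' j, (j + 1) • (X : ℕ⟦X⟧) ^ ((i + 1) * (j + 1))) q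
      (q ^ (i + 1) / (1 - q ^ (i + 1)) ^ 2) := by
  have hx : ‖q ^ (i + 1)‖ < 1 := norm_pow_lt_one hq i.succ_ne_zero
  refine hasValue_tsum_smul_X_pow
    ((mul_right_injective₀ i.succ_ne_zero).comp (add_left_injective 1))
    (Nat.Partition.summable_genFun_term (R := ℕ) (fun _ c ↦ c) i) ?_
  have hs := hasSum_coe_mul_geometric_of_norm_lt_one hx
  rw [← hasSum_nat_add_iff' 1, sum_range_one, Nat.cast_zero, zero_mul, sub_zero] at hs
  exact hs.congr_fun fun j ↦ by rw [pow_mul]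

lemma summable_pow_div_one_sub_pow_sq {r : ℝ} (hr₀ : 0 ≤ r) (hr : r < 1) :
    Summable fun i : ℕ ↦ r ^ (i + 1) / (1 - r ^ (i + 1)) ^ 2 := by
  have hs := (summable_nat_add_iff 1).2 (summable_geometric_of_lt_one hr₀ hr)
  refine (hs.div_const ((1 - r) ^ 2)).of_nonneg_of_le (fun i ↦ by positivity) fun i ↦ ?_
  have h := pow_le_of_le_one hr₀ hr.le i.succ_ne_zero
  have := sub_pos.2 hr
  gcongr

lemma one_add_div_one_sub_sq {K : Type*} [Field K] {x : K} (h₁ : 1 - x ≠ 0) (h₂ : 1 - x ^ 2 ≠ 0)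
    (h₃ : 1 - x ^ 3 ≠ 0) :
    1 + x / (1 - x) ^ 2 = (1 - x ^ 6) / ((1 - x) * (1 - x ^ 2) * (1 - x ^ 3)) := by
  field_simp
  ring

lemma hasProd_one_add_pow_div_one_sub_pow_sq {q : ℂ} (hq : ‖q‖ < 1) :
    HasProd (fun i ↦ 1 + q ^ (i + 1) / (1 - q ^ (i + 1)) ^ 2)
      (eulerFun (q ^ 6) / (eulerFun q * eulerFun (q ^ 2) * eulerFun (q ^ 3))) := by
  have hq₂ := norm_pow_lt_one hq two_ne_zero
  have hq₃ := norm_pow_lt_one hq three_ne_zero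
  have hasProd_eulerFun {x : ℂ} (hx : ‖x‖ < 1) := (multipliable_one_sub_mul_pow x hx).hasProd
  have numerator := hasProd_eulerFun (norm_pow_lt_one hq (k := 6) (by simp))
  have denominator := ((hasProd_eulerFun hq).mul (hasProd_eulerFun hq₂)).mul (hasProd_eulerFun hq₃)
  have denominator_ne_zero := mul_ne_zero
    (mul_ne_zero (eulerFun_ne_zero hq) (eulerFun_ne_zero hq₂)) (eulerFun_ne_zero hq₃)
  refine (numerator.mul (denominator.inv₀ denominator_ne_zero)).congr_fun fun i ↦ ?_
  have h₁ := one_sub_self_mul_pow_ne_zero hq i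
  have h₂ := one_sub_self_mul_pow_ne_zero hq₂ i
  have h₃ := one_sub_self_mul_pow_ne_zero hq₃ i
  simp only [← pow_succ', pow_right_comm q _ (i + 1)] at h₁ h₂ h₃ ⊢
  exact one_add_div_one_sub_sq h₁ h₂ h₃

theorem hasSum_PD_mul_pow {q : ℂ} (hq : ‖q‖ < 1) :
    HasSum (fun n ↦ (PD n : ℂ) * q ^ n)
      (eulerFun (q ^ 6) / (eulerFun q * eulerFun (q ^ 2) * eulerFun (q ^ 3))) := by
  have h := HasValue.of_hasProd_one_add (Nat.Partition.hasProd_genFun (R := ℕ) fun _ c ↦ c)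
    (hasValue_tsum_succ_smul_X_pow hq)
    (hasValue_tsum_succ_smul_X_pow (q := ‖q‖) (by simpa using hq))
    (summable_pow_div_one_sub_pow_sq (norm_nonneg q) hq)
  simpa only [HasValue, coeff_genFun_eq_PD,
    (hasProd_one_add_pow_div_one_sub_pow_sq hq).tprod_eq] using h

end DesignatedSummands

end PowerSeriesValue

section Multisection

variable {K : Type*} [Field K] {ζ : K} {k : ℕ}

lemma sum_pow_pow_of_isPrimitiveRoot (hζ : IsPrimitiveRoot ζ k) (m : ℕ) :
    ∑ j ∈ range k, (ζ ^ m) ^ j = if k ∣ m then (k : K) else 0 := by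
  split_ifs with h
  · rw [(hζ.pow_eq_one_iff_dvd m).2 h]
    simp
  · have hm : ζ ^ m ≠ 1 := mt (hζ.pow_eq_one_iff_dvd m).1 h
    rw [geom_sum_eq hm, pow_right_comm, hζ.pow_eq_one, one_pow, sub_self, zero_div]

lemma hasSum_multisection [TopologicalSpace K] [IsTopologicalRing K] (hζ : IsPrimitiveRoot ζ k)
    {r s : ℕ} (hr : r < k) (hrs : k ∣ r + s) {a : ℕ → K} {u : K} {F : ℕ → K}
    (hF : ∀ j ∈ range k, HasSum (fun n ↦ a n * (ζ ^ j * u) ^ n) (F j)) :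
    HasSum (fun n ↦ k * (a (k * n + r) * u ^ (k * n + r))) (∑ j ∈ range k, (ζ ^ s) ^ j * F j) := by
  have filter (n : ℕ) : ∑ j ∈ range k, (ζ ^ s) ^ j * (a n * (ζ ^ j * u) ^ n) =
      (if k ∣ n + s then (k : K) else 0) * (a n * u ^ n) := by
    rw [← sum_pow_pow_of_isPrimitiveRoot hζ, sum_mul]
    exact sum_congr rfl fun j _ ↦ by ring
  have h := hasSum_sum fun j hj ↦ (hF j hj).mul_left ((ζ ^ s) ^ j)
  simp only [filter] at h
  have inj : Function.Injective fun n ↦ k * n + r :=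
    (add_left_injective r).comp (mul_right_injective₀ (Nat.ne_zero_of_lt hr))
  refine ((inj.hasSum_iff fun n hn ↦ ?_).2 h).congr_fun fun n ↦ ?_
  · rw [if_neg, zero_mul]
    intro hns
    have hmod : n ≡ r [MOD k] := Nat.ModEq.add_right_cancel' s
      (((Nat.modEq_zero_iff_dvd.2 hns)).trans (Nat.modEq_zero_iff_dvd.2 hrs).symm)
    rw [Nat.ModEq, Nat.mod_eq_of_lt hr] at hmod
    exact hn ⟨n / k, by simp only [← hmod, Nat.div_add_mod]⟩
  · have hdvd : k ∣ k * n + r + s := by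
      rw [add_assoc]; exact dvd_add (dvd_mul_right k n) hrs
    rw [Function.comp_apply, if_pos hdvd]

end Multisection

section ArithmeticProgression

variable {q : ℂ}

lemma prod_eulerFun_mul_eulerFun_sq {ω : ℂ} (hω : IsPrimitiveRoot ω 3) (hq : ‖q‖ < 1) :
    (∏ j ∈ range 3, eulerFun (ω ^ j * q) * eulerFun ((ω ^ j * q) ^ 2)) *
        (eulerFun (q ^ 9) * eulerFun (q ^ 18)) =
      (eulerFun (q ^ 3) * eulerFun (q ^ 6)) ^ 4 := by
  have h₁ := prod_eulerFun_of_isPrimitiveRoot Nat.prime_three hω hq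
  have h₂ := prod_eulerFun_of_isPrimitiveRoot Nat.prime_three
    (hω.pow_of_coprime 2 (by norm_num)) (norm_pow_lt_one hq two_ne_zero)
  simp only [← pow_mul, Nat.reducePow, Nat.reduceMul, Nat.reduceAdd] at h₁ h₂
  rw [prod_mul_distrib, mul_mul_mul_comm, mul_pow, h₁, ← h₂]
  congr 2
  exact prod_congr rfl fun j _ ↦ by ring_nf

lemma sum_pow_div_eulerFun_mul_eulerFun_sq {ω : ℂ} (hω : IsPrimitiveRoot ω 3) (hq₀ : q ≠ 0)
    (hq : ‖q‖ < 1) :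
    ∑ j ∈ range 3, ω ^ j / (eulerFun (ω ^ j * q) * eulerFun ((ω ^ j * q) ^ 2)) =
      9 * q ^ 2 * (eulerFun (q ^ 9) * eulerFun (q ^ 18)) ^ 3 /
        (eulerFun (q ^ 3) * eulerFun (q ^ 6)) ^ 4 := by
  have norm_lt (j : ℕ) : ‖ω ^ j * q‖ < 1 := (norm_pow_mul_of_isPrimitiveRoot hω q j).trans_lt hq
  have pow_eq := pow_mul_pow_mul_of_isPrimitiveRoot hω q
  have dissection (j : ℕ) := eulerFun_mul_eulerFun_sq_dissection
    (mul_ne_zero (pow_ne_zero j (hω.ne_zero three_ne_zero)) hq₀) (norm_lt j)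
  have f_ne_zero (j : ℕ) := mul_ne_zero (eulerFun_ne_zero (norm_lt j))
    (eulerFun_ne_zero (norm_pow_lt_one (norm_lt j) two_ne_zero))
  have h₉ := eulerFun_ne_zero (norm_pow_lt_one hq (k := 9) (by simp))
  have h₁₈ := eulerFun_ne_zero (norm_pow_lt_one hq (k := 18) (by simp))
  have outer := theta_outer_mul_theta_outer (pow_ne_zero 3 hq₀)
    (norm_pow_lt_one hq three_ne_zero)
  simp only [← pow_mul, Nat.reduceMul] at outer
  rw [sum_pow_div_of_isPrimitiveRoot_three hω
    (theta (q ^ 9) (q ^ 18) * theta (-q ^ 3) (q ^ 9)) (-(eulerFun (q ^ 9) * eulerFun (q ^ 18)))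
    (-(theta (q ^ 3) (q ^ 18) * theta (-q ^ 9) (q ^ 9))) q (fun j ↦ ?_) f_ne_zero,
    ← prod_eulerFun_mul_eulerFun_sq hω hq, mul_neg, outer]
  · field_simp
    ring
  · rw [dissection j, pow_eq j 1, pow_eq j 3, pow_eq j 6]
    ring

theorem hasSum_PD_three_mul_add_two (hq₀ : q ≠ 0) (hq : ‖q‖ < 1) :
    HasSum (fun n ↦ (PD (3 * n + 2) : ℂ) * q ^ n)
      (3 * (eulerFun (q ^ 3) * eulerFun (q ^ 6)) ^ 3 /
        (eulerFun q ^ 5 * eulerFun (q ^ 2) ^ 3)) := by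
  obtain ⟨u, rfl⟩ := IsAlgClosed.exists_pow_nat_eq q three_pos
  have hu₀ : u ≠ 0 := ne_zero_pow three_ne_zero hq₀
  have hu : ‖u‖ < 1 := by
    rwa [norm_pow, pow_lt_one_iff_of_nonneg (norm_nonneg u) three_ne_zero] at hq
  obtain ⟨ω, hω⟩ : ∃ ω : ℂ, IsPrimitiveRoot ω 3 := ⟨_, Complex.isPrimitiveRoot_exp 3 three_ne_zero⟩
  have hF (j : ℕ) : HasSum (fun n ↦ (PD n : ℂ) * (ω ^ j * u) ^ n) (eulerFun (u ^ 6) /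
      eulerFun (u ^ 3) / (eulerFun (ω ^ j * u) * eulerFun ((ω ^ j * u) ^ 2))) := by
    have h := hasSum_PD_mul_pow ((norm_pow_mul_of_isPrimitiveRoot hω u j).trans_lt hu)
    rwa [pow_mul_pow_mul_of_isPrimitiveRoot hω u j 1, pow_mul_pow_mul_of_isPrimitiveRoot hω u j 2,
      mul_comm (eulerFun _ * _), ← div_div] at h
  have h := hasSum_multisection hω (r := 2) (s := 1) (by norm_num) (by norm_num) fun j _ ↦ hF j
  have h₃ := eulerFun_ne_zero (norm_pow_lt_one hu three_ne_zero)
  have h₆ := eulerFun_ne_zero (norm_pow_lt_one hu (k := 6) (by simp))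
  simp only [pow_one, mul_div_left_comm _ (_ / _), ← mul_sum,
    sum_pow_div_eulerFun_mul_eulerFun_sq hω hu₀ hu] at h
  refine (hasSum_mul_left_iff (mul_ne_zero three_ne_zero (pow_ne_zero 2 hu₀))).1 ?_
  convert h using 1
  · ext n
    push_cast
    ring
  · simp only [← pow_mul, Nat.reduceMul]
    field_simp
    ring

end ArithmeticProgression

end QSeries

open QSeries in
theorem generating_function_PD_three_n_add_two (q : ℂ) (hq : ‖q‖ < 1) :
    ∑' n : ℕ, (PD (3 * n + 2) : ℂ) * q ^ n =
      3 * (qPoch (q ^ 3) (q ^ 6) ^ 3 * qPoch (q ^ 6) (q ^ 6) ^ 6) /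
        (qPoch q (q ^ 2) ^ 5 * qPoch (q ^ 2) (q ^ 2) ^ 8) := by
  rcases eq_or_ne q 0 with rfl | hq₀
  · rw [tsum_eq_single 0 fun n hn ↦ by simp [hn]]
    simp [PD_two, qPoch]
  · have hq₃ := norm_pow_lt_one hq three_ne_zero
    have h₁ := eulerFun_ne_zero hq
    have h₂ := eulerFun_ne_zero (norm_pow_lt_one hq two_ne_zero)
    have h₆ := eulerFun_ne_zero (norm_pow_lt_one hq (k := 6) (by simp))
    have cube_eq_div := qPoch_sq_eq_div hq₃
    simp only [← pow_mul, Nat.reduceMul] at cube_eq_div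
    rw [(hasSum_PD_three_mul_add_two hq₀ hq).tsum_eq, qPoch_sq_eq_div hq, cube_eq_div,
      ← eulerFun, ← eulerFun]
    field_simp
end

section
/- For every complex number q with |q| < 1, ∑_{n=0}^∞ PD(3n) q^n = 1/((q; q^6)_∞^5 (q^3; q^6)_∞^2 (q^5; q^6)_∞^5) · ( (q^4; q^4)_∞^6 (q^6; q^6)_∞^4 / ((q^2; q^2)_∞^{10} (q^{12}; q^{12})_∞^2) + 3 q^2 (q^{12}; q^{12})_∞^6 / ((q^2; q^2)_∞^6 (q^4; q^4)_∞^2) ). -/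
open Finset

/-!
Write `fₖ = (qᵏ; qᵏ)_∞`. The generating function of `PD` is `f₆ / (f₁ f₂ f₃)`, so the task is to
extract the powers `q ^ (3 * n)` from `1 / (f₁ f₂)`. Now `f₁ f₂ = φ(-q) ψ(q)`, and splitting the
Jacobi triple product series for `φ` and `ψ` according to the index modulo `3` writes `f₁ f₂` as
`a + x + y`, where `a`, `x`, `y` carry the exponents `0`, `1`, `2` modulo `3`. The product of the
conjugates of `f₁ f₂` under `q ↦ ω q`, with `ω` a primitive cube root of unity, is an explicit
product, so rationalizing the denominator gives
`∑ PD(3n) qⁿ = f₃⁹ / (f₁⁷ f₂ f₆³) - 2 q f₆⁶ / (f₁⁴ f₂⁴)`.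
Finally let `c(q) = f₃³ / f₁ = P + q Q` with `P` and `Q` even in `q`. Up to a common factor, the
right-hand side is `c(q)² - 2 q Q c(-q) = P² + 3 q² Q²`, which is the two-term form sought.
-/

open Filter Topology

section QPochhammer

lemma norm_pow_lt_one {𝕜 : Type*} [NormedDivisionRing 𝕜] {x : 𝕜} (hx : ‖x‖ < 1) {m : ℕ}
    (hm : m ≠ 0) : ‖x ^ m‖ < 1 := by
  rw [norm_pow]
  exact pow_lt_one₀ (norm_nonneg _) hx hm

lemma norm_primitiveRoot_pow_mul {ζ : ℂ} {k : ℕ} (hζ : IsPrimitiveRoot ζ k) (hk : k ≠ 0) (i : ℕ)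
    (x : ℂ) : ‖ζ ^ i * x‖ = ‖x‖ := by
  rw [norm_mul, norm_pow, hζ.norm'_eq_one hk, one_pow, one_mul]

lemma primitiveRoot_pow_mul_pow {M : Type*} [CommMonoid M] {ζ : M} {k : ℕ}
    (hζ : IsPrimitiveRoot ζ k) (i : ℕ) (x : M) (m : ℕ) : (ζ ^ i * x) ^ (k * m) = x ^ (k * m) := by
  rw [mul_pow, pow_right_comm, pow_mul ζ, hζ.pow_eq_one, one_pow, one_pow, one_mul]

lemma prod_one_sub_primitiveRoot_pow_mul {R : Type*} [CommRing R] [IsDomain R] {ζ : R} {k : ℕ}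
    (hζ : IsPrimitiveRoot ζ k) (hk : 0 < k) (x : R) :
    ∏ i ∈ range k, (1 - ζ ^ i * x) = 1 - x ^ k := by
  rw [← one_pow k, hζ.pow_sub_pow_eq_prod_sub_mul 1 x hk]
  refine prod_nbij (ζ ^ ·) (fun i _ ↦ ?_) (fun i hi j hj h ↦ ?_) (fun ξ hξ ↦ ?_) (fun i _ ↦ ?_)
  · rw [Polynomial.mem_nthRootsFinset hk, ← pow_mul, mul_comm, pow_mul, hζ.pow_eq_one, one_pow]
  · exact hζ.pow_inj (mem_range.1 hi) (mem_range.1 hj) h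
  · rw [mem_coe, Polynomial.mem_nthRootsFinset hk] at hξ
    have : NeZero k := ⟨hk.ne'⟩
    obtain ⟨i, hi, rfl⟩ := hζ.eq_pow_of_pow_eq_one hξ
    exact ⟨i, mem_coe.2 (mem_range.2 hi), rfl⟩
  · rw [one_pow]

variable {q : ℂ}

lemma summable_norm_neg_mul_pow (a : ℂ) (hq : ‖q‖ < 1) : Summable fun n : ℕ ↦ ‖-(a * q ^ n)‖ := by
  simp only [norm_neg, norm_mul, norm_pow]
  exact (summable_geometric_of_lt_one (norm_nonneg _) hq).mul_left _

lemma multipliable_one_sub_mul_pow (a : ℂ) (hq : ‖q‖ < 1) :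
    Multipliable fun n : ℕ ↦ 1 - a * q ^ n := by
  simpa only [← sub_eq_add_neg] using
    multipliable_one_add_of_summable (summable_norm_neg_mul_pow a hq)

lemma hasProd_qPoch (a : ℂ) (hq : ‖q‖ < 1) : HasProd (fun n : ℕ ↦ 1 - a * q ^ n) (qPoch a q) :=
  (multipliable_one_sub_mul_pow a hq).hasProd

lemma qPoch_ne_zero {a : ℂ} (ha : ‖a‖ < 1) (hq : ‖q‖ < 1) : qPoch a q ≠ 0 := by
  have hfactor (n : ℕ) : 1 + -(a * q ^ n) ≠ 0 := by
    rw [← sub_eq_add_neg]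
    refine (isUnit_one_sub_of_norm_lt_one ?_).ne_zero
    rw [norm_mul, norm_pow]
    exact mul_lt_one_of_nonneg_of_lt_one_left (norm_nonneg _) ha (pow_le_one₀ (norm_nonneg _) hq.le)
  simpa only [qPoch, sub_eq_add_neg] using
    tprod_one_add_ne_zero_of_summable hfactor (summable_norm_neg_mul_pow a hq)

lemma qPoch_eq_one_sub_mul (a : ℂ) (hq : ‖q‖ < 1) : qPoch a q = (1 - a) * qPoch (a * q) q := by
  have hshift (n : ℕ) : 1 - a * q ^ (n + 1) = 1 - a * q * q ^ n := by ring
  rw [qPoch, tprod_eq_zero_mul'] <;> simp only [hshift, pow_zero, mul_one]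
  · rfl
  · exact multipliable_one_sub_mul_pow _ hq

lemma qPoch_eq_prod_qPoch_pow (a : ℂ) (hq : ‖q‖ < 1) {m : ℕ} (hm : m ≠ 0) :
    qPoch a q = ∏ r ∈ range m, qPoch (a * q ^ r) (q ^ m) := by
  have : NeZero m := ⟨hm⟩
  have hterm (r : Fin m) (k : ℕ) :
      1 - a * q ^ (Nat.divModEquiv m).symm (k, r) = 1 - a * q ^ (r : ℕ) * (q ^ m) ^ k := by
    rw [Nat.divModEquiv_symm_apply, pow_add, pow_mul']
    ring
  let e := (Equiv.prodComm (Fin m) ℕ).trans (Nat.divModEquiv m).symm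
  have hmul : Multipliable fun p ↦ 1 - a * q ^ e p :=
    (e.multipliable_iff (f := fun n ↦ 1 - a * q ^ n)).2 (multipliable_one_sub_mul_pow a hq)
  calc qPoch a q = ∏' p : Fin m × ℕ, (1 - a * q ^ e p) :=
        (e.tprod_eq fun n ↦ 1 - a * q ^ n).symm
    _ = ∏' r : Fin m, qPoch (a * q ^ (r : ℕ)) (q ^ m) := by
        rw [hmul.tprod_prod' fun r ↦ ?_]
        · exact tprod_congr fun r ↦ tprod_congr fun k ↦ hterm r k
        · exact (multipliable_one_sub_mul_pow _ (norm_pow_lt_one hq hm)).congr fun k ↦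
            (hterm r k).symm
    _ = ∏ r ∈ range m, qPoch (a * q ^ r) (q ^ m) := by
        rw [tprod_fintype, Fin.prod_univ_eq_prod_range fun r ↦ qPoch (a * q ^ r) (q ^ m)]

lemma prod_qPoch_primitiveRoot_pow_mul {ζ : ℂ} {k : ℕ} (hζ : IsPrimitiveRoot ζ k) (hk : 0 < k)
    (a : ℂ) (hq : ‖q‖ < 1) :
    ∏ i ∈ range k, qPoch (ζ ^ i * a) q = qPoch (a ^ k) (q ^ k) := by
  refine (hasProd_prod fun i _ ↦ hasProd_qPoch (ζ ^ i * a) hq).unique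
    ((hasProd_qPoch (a ^ k) (norm_pow_lt_one hq hk.ne')).congr_fun fun n ↦ ?_)
  simp only [mul_assoc]
  rw [prod_one_sub_primitiveRoot_pow_mul hζ hk]
  ring

lemma qPoch_mul_qPoch_neg (a : ℂ) (hq : ‖q‖ < 1) :
    qPoch a q * qPoch (-a) q = qPoch (a ^ 2) (q ^ 2) := by
  simpa [prod_range_succ] using
    prod_qPoch_primitiveRoot_pow_mul (IsPrimitiveRoot.neg_one 0 two_ne_zero.symm) two_pos a hq

end QPochhammer

section EulerFunction

/-- The Euler function `(q; q)_∞`. -/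
noncomputable def eulerFn (q : ℂ) : ℂ := qPoch q q

variable {q : ℂ}

lemma qPoch_self (q : ℂ) : qPoch q q = eulerFn q := rfl

lemma eulerFn_zero : eulerFn 0 = 1 := by
  simp [eulerFn, qPoch]

lemma eulerFn_ne_zero (hq : ‖q‖ < 1) : eulerFn q ≠ 0 := qPoch_ne_zero hq hq

lemma eulerFn_pow_ne_zero (hq : ‖q‖ < 1) {m : ℕ} (hm : m ≠ 0) : eulerFn (q ^ m) ≠ 0 :=
  eulerFn_ne_zero (norm_pow_lt_one hq hm)

lemma eulerFn_eq_prod_qPoch_pow (hq : ‖q‖ < 1) {m : ℕ} (hm : m ≠ 0) :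
    eulerFn q = ∏ r ∈ range m, qPoch (q ^ (r + 1)) (q ^ m) := by
  simp only [eulerFn, qPoch_eq_prod_qPoch_pow q hq hm, pow_succ']

lemma eulerFn_eq_prod_mul_eulerFn_pow (hq : ‖q‖ < 1) {m : ℕ} (hm : m ≠ 0) :
    eulerFn q = (∏ r ∈ range (m - 1), qPoch (q ^ (r + 1)) (q ^ m)) * eulerFn (q ^ m) := by
  obtain ⟨m, rfl⟩ := Nat.exists_eq_add_one_of_ne_zero hm
  rw [eulerFn_eq_prod_qPoch_pow hq hm, prod_range_succ, Nat.add_sub_cancel, eulerFn]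

lemma prod_eulerFn_primitiveRoot_pow_mul {ζ : ℂ} {p : ℕ} (hp : p.Prime) (hζ : IsPrimitiveRoot ζ p)
    (hq : ‖q‖ < 1) :
    ∏ i ∈ range p, eulerFn (ζ ^ i * q) = eulerFn (q ^ p) ^ (p + 1) / eulerFn (q ^ p ^ 2) := by
  have hqp := norm_pow_lt_one hq hp.ne_zero
  have hsplit (i : ℕ) : eulerFn (ζ ^ i * q) =
      (∏ r ∈ range (p - 1), qPoch ((ζ ^ (r + 1)) ^ i * q ^ (r + 1)) (q ^ p)) *
        eulerFn (q ^ p) := by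
    have hnorm : ‖ζ ^ i * q‖ < 1 := by rwa [norm_primitiveRoot_pow_mul hζ hp.ne_zero]
    have hpow : (ζ ^ i * q) ^ p = q ^ p := by simpa using primitiveRoot_pow_mul_pow hζ i q 1
    rw [eulerFn_eq_prod_mul_eulerFn_pow hnorm hp.ne_zero, hpow]
    simp only [mul_pow, pow_right_comm ζ i]
  have hclass (r : ℕ) (hr : r ∈ range (p - 1)) :
      ∏ i ∈ range p, qPoch ((ζ ^ (r + 1)) ^ i * q ^ (r + 1)) (q ^ p) =
        qPoch ((q ^ p) ^ (r + 1)) ((q ^ p) ^ p) := by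
    have hcop : (r + 1).Coprime p :=
      (Nat.coprime_of_lt_prime r.succ_ne_zero (by rw [mem_range] at hr; omega) hp).symm
    rw [prod_qPoch_primitiveRoot_pow_mul (hζ.pow_of_coprime _ hcop) hp.pos _ hqp, pow_right_comm]
  have hp2 : q ^ p ^ 2 = (q ^ p) ^ p := by rw [sq, pow_mul]
  simp only [hsplit, prod_mul_distrib, prod_const, card_range]
  rw [Finset.prod_comm, prod_congr rfl hclass, hp2, eq_div_iff (eulerFn_pow_ne_zero hqp hp.ne_zero),
    mul_right_comm, ← eulerFn_eq_prod_mul_eulerFn_pow hqp hp.ne_zero, pow_succ']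

lemma qPoch_self_sq (hq : ‖q‖ < 1) : qPoch q (q ^ 2) = eulerFn q / eulerFn (q ^ 2) := by
  rw [eq_div_iff (eulerFn_pow_ne_zero hq two_ne_zero),
    eulerFn_eq_prod_mul_eulerFn_pow hq two_ne_zero]
  simp

lemma qPoch_neg_self (hq : ‖q‖ < 1) : qPoch (-q) q = eulerFn (q ^ 2) / eulerFn q := by
  rw [eq_div_iff (eulerFn_ne_zero hq), mul_comm]
  exact qPoch_mul_qPoch_neg q hq

lemma eulerFn_neg (hq : ‖q‖ < 1) :
    eulerFn (-q) = eulerFn (q ^ 2) ^ 3 / (eulerFn q * eulerFn (q ^ 4)) := by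
  have hq2 := norm_pow_lt_one hq two_ne_zero
  have hodd : qPoch (-q) (q ^ 2) = eulerFn (-q) / eulerFn (q ^ 2) := by
    simpa using qPoch_self_sq (q := -q) (by rwa [norm_neg])
  have hprod := qPoch_mul_qPoch_neg q hq2
  rw [qPoch_self_sq hq, hodd, qPoch_self_sq hq2, ← pow_mul] at hprod
  have h1 := eulerFn_ne_zero hq
  have h2 := eulerFn_ne_zero hq2
  have h4 := eulerFn_pow_ne_zero hq four_ne_zero
  field_simp at hprod ⊢
  linear_combination hprod

lemma qPoch_mul_qPoch_pow_five (hq : ‖q‖ < 1) :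
    qPoch q (q ^ 6) * qPoch (q ^ 5) (q ^ 6) =
      eulerFn q * eulerFn (q ^ 6) / (eulerFn (q ^ 2) * eulerFn (q ^ 3)) := by
  have hodd := qPoch_eq_prod_qPoch_pow q (norm_pow_lt_one hq two_ne_zero) three_ne_zero
  have hodd3 := qPoch_self_sq (norm_pow_lt_one hq three_ne_zero)
  simp only [prod_range_succ, range_zero, prod_empty, one_mul, ← pow_mul, ← pow_succ',
    Nat.reduceMul, Nat.reduceAdd, mul_zero, mul_one] at hodd hodd3
  rw [qPoch_self_sq hq, hodd3] at hodd
  have h2 := eulerFn_pow_ne_zero hq two_ne_zero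
  have h3 := eulerFn_pow_ne_zero hq three_ne_zero
  have h6 := eulerFn_pow_ne_zero hq (m := 6) (by norm_num)
  field_simp at hodd ⊢
  linear_combination -hodd

lemma qPoch_neg_mul_qPoch_neg_sq (hq : ‖q‖ < 1) :
    qPoch (-q) (q ^ 3) * qPoch (-q ^ 2) (q ^ 3) =
      eulerFn (q ^ 2) * eulerFn (q ^ 3) / (eulerFn q * eulerFn (q ^ 6)) := by
  have hsplit := qPoch_eq_prod_qPoch_pow (-q) hq three_ne_zero
  have hneg3 := qPoch_neg_self (norm_pow_lt_one hq three_ne_zero)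
  simp only [prod_range_succ, range_zero, prod_empty, one_mul, ← pow_mul, neg_mul, ← pow_succ',
    Nat.reduceMul, Nat.reduceAdd, pow_one] at hsplit hneg3
  rw [qPoch_neg_self hq, hneg3] at hsplit
  have h1 := eulerFn_ne_zero hq
  have h3 := eulerFn_pow_ne_zero hq three_ne_zero
  have h6 := eulerFn_pow_ne_zero hq (m := 6) (by norm_num)
  field_simp at hsplit ⊢
  linear_combination -hsplit

end EulerFunction

section GaussBinomial

variable {R : Type*}

/-- The Gaussian binomial coefficient `[n, k]_q`, defined by the `q`-Pascal rule so that no division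
is needed. -/
def gaussBinom [Semiring R] (q : R) : ℕ → ℕ → R
  | _, 0 => 1
  | 0, _ + 1 => 0
  | n + 1, k + 1 => gaussBinom q n k + q ^ (k + 1) * gaussBinom q n (k + 1)

lemma gaussBinom_zero_right [Semiring R] (q : R) (n : ℕ) : gaussBinom q n 0 = 1 := by
  cases n <;> rfl

lemma gaussBinom_eq_zero_of_lt [Semiring R] (q : R) {n k : ℕ} (h : n < k) :
    gaussBinom q n k = 0 := by
  induction n generalizing k with
  | zero =>
    obtain ⟨k, rfl⟩ := Nat.exists_eq_add_one_of_ne_zero h.ne'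
    rfl
  | succ n ih =>
    obtain ⟨k, rfl⟩ := Nat.exists_eq_add_one_of_ne_zero (Nat.ne_zero_of_lt h)
    rw [gaussBinom, ih (by lia), ih (by lia), mul_zero, add_zero]

lemma gaussBinom_self [Semiring R] (q : R) (n : ℕ) : gaussBinom q n n = 1 := by
  induction n with
  | zero => rfl
  | succ n ih => rw [gaussBinom, ih, gaussBinom_eq_zero_of_lt q n.lt_succ_self, mul_zero, add_zero]

lemma gaussBinom_mul_prod_mul_prod [CommRing R] (q : R) (k m : ℕ) :
    gaussBinom q (k + m) k * (∏ i ∈ range k, (1 - q ^ (i + 1))) *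
      ∏ i ∈ range m, (1 - q ^ (i + 1)) = ∏ i ∈ range (k + m), (1 - q ^ (i + 1)) := by
  induction k generalizing m with
  | zero => simp [gaussBinom_zero_right]
  | succ k ihk =>
    induction m with
    | zero => simp [gaussBinom_self]
    | succ m ihm =>
      have hk := ihk (m + 1)
      rw [show k + (m + 1) = k + 1 + m by lia] at hk
      rw [← add_assoc, gaussBinom, prod_range_succ _ (k + 1 + m), prod_range_succ _ m]
      rw [prod_range_succ _ m] at hk
      rw [prod_range_succ _ k] at ihm ⊢
      linear_combination (1 - q ^ (k + 1)) * hk + q ^ (k + 1) * (1 - q ^ (m + 1)) * ihm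

lemma sum_gaussBinom_succ_mul [CommSemiring R] (q : R) (n : ℕ) (c : ℕ → R) :
    ∑ i ∈ range (n + 2), gaussBinom q (n + 1) i * c i =
      ∑ i ∈ range (n + 1), gaussBinom q n i * (q ^ i * c i + c (i + 1)) := by
  have htop := gaussBinom_eq_zero_of_lt q n.lt_succ_self
  simp only [sum_range_succ' _ (n + 1), gaussBinom, add_mul, mul_add, sum_add_distrib]
  rw [sum_range_succ (fun i ↦ q ^ (i + 1) * gaussBinom q n (i + 1) * c (i + 1)), htop,
    sum_range_succ' (fun i ↦ gaussBinom q n i * (q ^ i * c i))]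
  simp only [gaussBinom_zero_right, pow_zero, zero_mul, mul_zero, one_mul, add_zero,
    mul_left_comm, mul_assoc]
  abel

end GaussBinomial

section ThetaFunction

/-- The exponent `n (n - 1) / 2` of the theta function, natural-valued so that the nome may
vanish. -/
def tri (n : ℤ) : ℕ := (n * (n - 1) / 2).toNat

lemma two_mul_tri (n : ℤ) : 2 * (tri n : ℤ) = n * (n - 1) := by
  have hnonneg : 0 ≤ n * (n - 1) := by
    rcases le_or_gt n 0 with hn | hn
    · exact mul_nonneg_of_nonpos_of_nonpos hn (by lia)
    · exact mul_nonneg hn.le (by lia)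
  rw [tri, Int.toNat_of_nonneg (Int.ediv_nonneg hnonneg two_pos.le),
    Int.mul_ediv_cancel' (Int.even_mul_pred_self n).two_dvd]

lemma tri_neg (n : ℤ) : (tri (-n) : ℤ) = tri n + n := by
  linarith [two_mul_tri n, two_mul_tri (-n)]

/-- The general term of the theta series `∑ₙ (-z)ⁿ q^(n (n - 1) / 2)`. -/
def thetaTerm {K : Type*} [Field K] (z q : K) (n : ℤ) : K := (-z) ^ n * q ^ tri n

/-- Jacobi's theta function `∑ₙ (-z)ⁿ q^(n (n - 1) / 2)`, the sum being over all integers. -/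
noncomputable def theta (z q : ℂ) : ℂ := ∑' n : ℤ, thetaTerm z q n

section Field

variable {K : Type*} [Field K] {z : K}

lemma thetaTerm_natCast_succ (z q : K) (n : ℕ) :
    thetaTerm z q (n + 1 : ℕ) = -z * q ^ n * thetaTerm z q n := by
  have htri : tri (n + 1 : ℕ) = n + tri n := by
    have := two_mul_tri (n + 1 : ℕ)
    push_cast at this
    linarith [two_mul_tri n]
  rw [thetaTerm, thetaTerm, zpow_natCast, zpow_natCast, htri, pow_add]
  ring

lemma thetaTerm_mul_natCast (z q : K) (n : ℕ) :
    thetaTerm (z * q) q n = q ^ n * thetaTerm z q n := by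
  simp only [thetaTerm, zpow_natCast]
  ring

lemma thetaTerm_neg_natCast (z q : K) (n : ℕ) : thetaTerm z q (-n) = thetaTerm (q / z) q n := by
  have htri : tri (-n) = tri n + n := by exact_mod_cast tri_neg n
  rw [thetaTerm, thetaTerm, zpow_neg, zpow_natCast, zpow_natCast, htri, pow_add, ← div_neg, div_pow]
  ring

lemma thetaTerm_natCast_sub_mul (hz : z ≠ 0) (q : K) (i N : ℕ) :
    thetaTerm z q (i - N) * -(q / z * q ^ N) = q ^ i * thetaTerm z q (i - (N + 1 : ℕ)) := by
  have htri : 1 + N + tri (i - N) = i + tri (i - (N + 1 : ℕ)) := by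
    have := two_mul_tri (i - (N + 1 : ℕ))
    push_cast at this ⊢
    linarith [two_mul_tri (i - N)]
  have hpow : (-z) ^ ((i : ℤ) - N) = (-z) ^ ((i : ℤ) - (N + 1 : ℕ)) * (-z) := by
    rw [← zpow_add_one₀ (neg_ne_zero.2 hz)]
    push_cast
    ring_nf
  rw [thetaTerm, thetaTerm, hpow, mul_left_comm (q ^ i), ← pow_add, ← htri, pow_add, pow_add]
  field_simp

lemma prod_one_sub_mul_pow_eq_sum_gaussBinom (z q : K) (M : ℕ) :
    ∏ k ∈ range M, (1 - z * q ^ k) =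
      ∑ i ∈ range (M + 1), gaussBinom q M i * thetaTerm z q i := by
  induction M generalizing z with
  | zero => simp [gaussBinom_self, thetaTerm, tri]
  | succ M ih =>
    have hshift (k : ℕ) : z * q ^ (k + 1) = z * q * q ^ k := by ring
    simp only [prod_range_succ', hshift, ih, sum_gaussBinom_succ_mul, sum_mul]
    refine sum_congr rfl fun i _ ↦ ?_
    rw [thetaTerm_mul_natCast, thetaTerm_natCast_succ]
    ring

lemma prod_mul_prod_eq_sum_gaussBinom (hz : z ≠ 0) (q : K) (M N : ℕ) :
    (∏ k ∈ range M, (1 - z * q ^ k)) * ∏ k ∈ range N, (1 - q / z * q ^ k) =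
      ∑ i ∈ range (M + N + 1), gaussBinom q (M + N) i * thetaTerm z q (i - N) := by
  induction N with
  | zero => simp [prod_one_sub_mul_pow_eq_sum_gaussBinom]
  | succ N ih =>
    rw [prod_range_succ, ← mul_assoc, ih, ← add_assoc, sum_gaussBinom_succ_mul, sum_mul]
    refine sum_congr rfl fun i _ ↦ ?_
    rw [mul_assoc, mul_one_sub, sub_eq_add_neg, ← mul_neg, thetaTerm_natCast_sub_mul hz,
      Nat.cast_succ i, Nat.cast_succ N, add_sub_add_right_eq_sub, add_comm (thetaTerm z q _)]

end Field

section JacobiTripleProduct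

variable {z q : ℂ}

lemma summable_of_succ_eq_mul_pow_mul {f : ℕ → ℂ} (a : ℂ) (hq : ‖q‖ < 1)
    (hf : ∀ n, f (n + 1) = a * q ^ n * f n) : Summable f := by
  have hlim : Tendsto (fun n ↦ ‖a * q ^ n‖) atTop (𝓝 0) := by
    simpa using ((tendsto_pow_atTop_nhds_zero_of_norm_lt_one hq).const_mul a).norm
  refine summable_of_ratio_norm_eventually_le one_half_lt_one ?_
  filter_upwards [hlim.eventually_le_const one_half_pos] with n hn
  rw [hf, norm_mul]
  gcongr

lemma summable_thetaTerm (z : ℂ) (hq : ‖q‖ < 1) : Summable (thetaTerm z q) := by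
  have hnat (w : ℂ) : Summable fun n : ℕ ↦ thetaTerm w q n :=
    summable_of_succ_eq_mul_pow_mul (-w) hq (thetaTerm_natCast_succ w q)
  refine .of_nat_of_neg (hnat z) ?_
  simpa only [thetaTerm_neg_natCast] using hnat (q / z)

/-- The finite product `(q; q)ₙ`. -/
noncomputable def eulerProd (q : ℂ) (n : ℕ) : ℂ := ∏ i ∈ range n, (1 - q ^ (i + 1))

lemma eulerProd_ne_zero (hq : ‖q‖ < 1) (n : ℕ) : eulerProd q n ≠ 0 :=
  prod_ne_zero_iff.2 fun i _ ↦
    (isUnit_one_sub_of_norm_lt_one (norm_pow_lt_one hq i.succ_ne_zero)).ne_zero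

lemma tendsto_eulerProd (hq : ‖q‖ < 1) : Tendsto (eulerProd q) atTop (𝓝 (eulerFn q)) :=
  (hasProd_qPoch q hq).tendsto_prod_nat.congr fun n ↦ by simp only [eulerProd, pow_succ']

lemma gaussBinom_eq_div (hq : ‖q‖ < 1) (k m : ℕ) :
    gaussBinom q (k + m) k = eulerProd q (k + m) / (eulerProd q k * eulerProd q m) := by
  rw [eq_div_iff (mul_ne_zero (eulerProd_ne_zero hq k) (eulerProd_ne_zero hq m)), ← mul_assoc]
  exact gaussBinom_mul_prod_mul_prod q k m

lemma exists_norm_gaussBinom_le (hq : ‖q‖ < 1) : ∃ C, ∀ n k, ‖gaussBinom q n k‖ ≤ C := by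
  have hP := tendsto_eulerProd hq
  obtain ⟨A, hA⟩ := (Metric.isBounded_range_of_tendsto _ hP).exists_norm_le
  obtain ⟨B, hB⟩ :=
    (Metric.isBounded_range_of_tendsto _ (hP.inv₀ (eulerFn_ne_zero hq))).exists_norm_le
  simp only [Set.forall_mem_range] at hA hB
  have hA0 : 0 ≤ A := (norm_nonneg _).trans (hA 0)
  have hB0 : 0 ≤ B := (norm_nonneg _).trans (hB 0)
  refine ⟨A * (B * B), fun n k ↦ ?_⟩
  rcases lt_or_ge n k with hnk | hkn
  · rw [gaussBinom_eq_zero_of_lt q hnk, norm_zero]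
    positivity
  · obtain ⟨m, rfl⟩ := Nat.exists_eq_add_of_le hkn
    rw [gaussBinom_eq_div hq, div_eq_mul_inv, mul_inv, norm_mul, norm_mul]
    gcongr
    exacts [hA _, hB _, hB _]

/-- The coefficient of `thetaTerm z q n` in the symmetric finite triple product of order `N`. -/
noncomputable def tripleCoeff (q : ℂ) (N : ℕ) (n : ℤ) : ℂ :=
  if -N ≤ n then gaussBinom q (N + N) (n + N).toNat else 0

lemma tendsto_tripleCoeff (hq : ‖q‖ < 1) (n : ℤ) :
    Tendsto (fun N ↦ tripleCoeff q N n) atTop (𝓝 (eulerFn q)⁻¹) := by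
  have h0 := eulerFn_ne_zero hq
  have hP := tendsto_eulerProd hq
  have hsub (m : ℤ) : Tendsto (fun N : ℕ ↦ (m + N).toNat) atTop atTop :=
    tendsto_atTop.2 fun b ↦ (eventually_ge_atTop (b + m.natAbs)).mono fun N hN ↦ by lia
  have hlim := (hP.comp (tendsto_id.atTop_add_atTop tendsto_id)).div
    ((hP.comp (hsub n)).mul (hP.comp (hsub (-n)))) (mul_ne_zero h0 h0)
  rw [div_mul_cancel_left₀ h0] at hlim
  refine hlim.congr' ((eventually_ge_atTop n.natAbs).mono fun N hN ↦ ?_)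
  have hNN : (n + N).toNat + (-n + N).toNat = N + N := by lia
  change _ = tripleCoeff q N n
  rw [tripleCoeff, if_pos (by lia), ← hNN, gaussBinom_eq_div hq, hNN]
  rfl

lemma hasSum_tripleCoeff_mul_thetaTerm (hz : z ≠ 0) (q : ℂ) (N : ℕ) :
    HasSum (fun n ↦ tripleCoeff q N n * thetaTerm z q n)
      ((∏ k ∈ range N, (1 - z * q ^ k)) * ∏ k ∈ range N, (1 - q / z * q ^ k)) := by
  have hinj : Function.Injective fun i : ℕ ↦ (i : ℤ) - N :=
    sub_left_injective.comp Nat.cast_injective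
  rw [prod_mul_prod_eq_sum_gaussBinom hz, ← hinj.hasSum_iff fun n hn ↦ ?_]
  · simp only [Function.comp_def, tripleCoeff, neg_le_sub_iff_le_add, sub_add_cancel,
      Int.toNat_natCast]
    simpa using hasSum_sum_of_ne_finset_zero fun i hi ↦ by
      rw [gaussBinom_eq_zero_of_lt q (by simpa [Nat.lt_succ_iff] using hi), zero_mul]
  · exact mul_eq_zero_of_left (if_neg fun h ↦ hn ⟨(n + N).toNat, by simp only; lia⟩) _

theorem theta_eq_qPoch_mul_qPoch_mul_eulerFn (hz : z ≠ 0) (hq : ‖q‖ < 1) :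
    theta z q = qPoch z q * qPoch (q / z) q * eulerFn q := by
  obtain ⟨C, hC⟩ := exists_norm_gaussBinom_le hq
  have hbound (N : ℕ) (n : ℤ) : ‖tripleCoeff q N n‖ ≤ C := by
    unfold tripleCoeff
    split_ifs
    · exact hC _ _
    · simpa using (norm_nonneg _).trans (hC 0 0)
  have hseries : Tendsto (fun N ↦ ∑' n, tripleCoeff q N n * thetaTerm z q n) atTop
      (𝓝 (∑' n, (eulerFn q)⁻¹ * thetaTerm z q n)) := by
    refine tendsto_tsum_of_dominated_convergence ((summable_thetaTerm z hq).norm.mul_left C)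
      (fun n ↦ (tendsto_tripleCoeff hq n).mul_const _) (.of_forall fun N n ↦ ?_)
    rw [norm_mul]
    gcongr
    exact hbound N n
  have hprod := (hasProd_qPoch z hq).tendsto_prod_nat.mul
    (hasProd_qPoch (q / z) hq).tendsto_prod_nat
  simp only [(hasSum_tripleCoeff_mul_thetaTerm hz q _).tsum_eq, tsum_mul_left] at hseries
  rw [tendsto_nhds_unique hprod hseries, theta, mul_comm,
    mul_inv_cancel_left₀ (eulerFn_ne_zero hq)]

end JacobiTripleProduct
end ThetaFunction

section ThetaIdentities

lemma tri_natCast (n : ℕ) : tri n = n.choose 2 := by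
  rw [tri, Nat.choose_two_right]
  rcases n with _ | n
  · rfl
  · push_cast [add_sub_cancel_right, Nat.add_sub_cancel]
    norm_cast

lemma thetaTerm_add_one {K : Type*} [Field K] {z q : K} (hz : z ≠ 0) (hq0 : q ≠ 0) (n : ℤ) :
    thetaTerm z q (n + 1) = -z * thetaTerm (z * q) q n := by
  have htri : (tri (n + 1) : ℤ) = n + tri n := by linarith [two_mul_tri n, two_mul_tri (n + 1)]
  simp only [thetaTerm, ← zpow_natCast, htri, zpow_add₀ hq0, zpow_add_one₀ (neg_ne_zero.2 hz),
    ← neg_mul, mul_zpow]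
  ring

lemma thetaTerm_add_mul {K : Type*} [Field K] {z q : K} (hz : z ≠ 0) (hq0 : q ≠ 0) (m r : ℕ)
    (k : ℤ) :
    thetaTerm z q (r + m * k) = (-z) ^ r * q ^ r.choose 2 *
      thetaTerm (-((-z) ^ m * q ^ (m.choose 2 + m * r))) (q ^ m ^ 2) k := by
  have htri : (tri (r + m * k) : ℤ) =
      tri r + (m ^ 2 * tri k + (m.choose 2 + m * r : ℕ) * k) := by
    have hm := two_mul_tri m
    rw [tri_natCast] at hm
    refine mul_left_cancel₀ two_ne_zero ?_
    push_cast
    linear_combination two_mul_tri (r + m * k) - two_mul_tri r - m ^ 2 * two_mul_tri k - k * hm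
  simp only [thetaTerm, ← tri_natCast r, neg_neg, mul_zpow, zpow_add₀ (neg_ne_zero.2 hz),
    ← zpow_natCast, ← zpow_mul, htri, zpow_add₀ hq0, Nat.cast_pow]
  ring

variable {z w q : ℂ}

lemma theta_symm (hz : z ≠ 0) (hq0 : q ≠ 0) (hq : ‖q‖ < 1) : theta z q = theta (q / z) q := by
  rw [theta_eq_qPoch_mul_qPoch_mul_eulerFn hz hq,
    theta_eq_qPoch_mul_qPoch_mul_eulerFn (div_ne_zero hq0 hz) hq, div_div_cancel₀ hq0,
    mul_comm (qPoch z q)]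

lemma theta_shift (hz : z ≠ 0) (hq0 : q ≠ 0) : theta z q = -z * theta (z * q) q := by
  rw [theta, ← (Equiv.addRight (1 : ℤ)).tsum_eq, theta, ← tsum_mul_left]
  exact tsum_congr fun n ↦ thetaTerm_add_one hz hq0 n

theorem theta_dissection (hz : z ≠ 0) (hq0 : q ≠ 0) (hq : ‖q‖ < 1) {m : ℕ} (hm : m ≠ 0) :
    theta z q = ∑ r ∈ range m, (-z) ^ r * q ^ r.choose 2 *
      theta (-((-z) ^ m * q ^ (m.choose 2 + m * r))) (q ^ m ^ 2) := by
  have : NeZero m := ⟨hm⟩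
  let e := (Equiv.prodComm (Fin m) ℤ).trans (Int.divModEquiv m).symm
  have hsum : Summable fun p ↦ thetaTerm z q (e p) :=
    (e.summable_iff (f := thetaTerm z q)).2 (summable_thetaTerm z hq)
  have hclass (r : Fin m) : ∑' k, thetaTerm z q (e (r, k)) = (-z) ^ (r : ℕ) *
      q ^ (r : ℕ).choose 2 * theta (-((-z) ^ m * q ^ (m.choose 2 + m * r))) (q ^ m ^ 2) := by
    rw [theta, ← tsum_mul_left]
    exact tsum_congr fun k ↦ by
      simpa [e, add_comm, mul_comm] using thetaTerm_add_mul hz hq0 m r k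
  rw [theta, ← e.tsum_eq, hsum.tsum_prod, tsum_fintype]
  simp only [hclass]
  exact Fin.sum_univ_eq_sum_range (fun r ↦ (-z) ^ r * q ^ r.choose 2 *
    theta (-((-z) ^ m * q ^ (m.choose 2 + m * r))) (q ^ m ^ 2)) m

lemma theta_three_dissection (hz : z ≠ 0) (hq0 : q ≠ 0) (hq : ‖q‖ < 1) :
    theta z q = theta (z ^ 3 * q ^ 3) (q ^ 9) - z * theta (z ^ 3 * q ^ 6) (q ^ 9) +
      z ^ 2 * q * theta (z ^ 3 * q ^ 9) (q ^ 9) := by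
  rw [theta_dissection hz hq0 hq three_ne_zero]
  simp [sum_range_succ, Nat.choose, Odd.neg_pow (Nat.odd_iff.2 rfl : Odd 3)]
  ring

/-- The pairs of integers with even sum are the `(r + s, r - s)`, those with odd sum the
`(r + s + 1, r - s)`. -/
def sumDiffEquiv : (ℤ × ℤ) ⊕ (ℤ × ℤ) ≃ ℤ × ℤ where
  toFun := Sum.elim (fun p ↦ (p.1 + p.2, p.1 - p.2)) fun p ↦ (p.1 + p.2 + 1, p.1 - p.2)
  invFun p := if (p.1 + p.2) % 2 = 0 then .inl ((p.1 + p.2) / 2, (p.1 - p.2) / 2)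
    else .inr ((p.1 + p.2) / 2, (p.1 - p.2) / 2)
  left_inv := by
    rintro (⟨r, s⟩ | ⟨r, s⟩) <;> grind
  right_inv := by
    rintro ⟨a, b⟩
    grind

lemma thetaTerm_add_mul_thetaTerm_sub (hz : z ≠ 0) (hw : w ≠ 0) (hq0 : q ≠ 0) (r s : ℤ) :
    thetaTerm z q (r + s) * thetaTerm w q (r - s) =
      thetaTerm (-(z * w)) (q ^ 2) r * thetaTerm (-(z * q / w)) (q ^ 2) s := by
  have htri : (tri (r + s) + tri (r - s) : ℤ) = 2 * tri r + (2 * tri s + s) := by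
    linarith [two_mul_tri (r + s), two_mul_tri (r - s), two_mul_tri r, two_mul_tri s]
  have hpow : q ^ tri (r + s) * q ^ tri (r - s) = (q ^ 2) ^ tri r * ((q ^ 2) ^ tri s * q ^ s) := by
    simp only [← zpow_natCast, ← zpow_mul, ← zpow_add₀ hq0, Nat.cast_ofNat, htri]
  have hzw : - -(z * w) = -z * -w := by ring
  have hzqw : - -(z * q / w) = -z * q / -w := by rw [neg_neg, neg_mul, neg_div_neg_eq]
  calc thetaTerm z q (r + s) * thetaTerm w q (r - s)
      = (-z) ^ (r + s) * (-w) ^ (r - s) * (q ^ tri (r + s) * q ^ tri (r - s)) := by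
        rw [thetaTerm, thetaTerm]
        ring
    _ = _ := by
        rw [hpow, thetaTerm, thetaTerm, hzw, hzqw, zpow_add₀ (neg_ne_zero.2 hz),
          zpow_sub₀ (neg_ne_zero.2 hw), mul_zpow, div_zpow, mul_zpow]
        ring

lemma hasSum_thetaTerm_mul_thetaTerm (z w : ℂ) (hq : ‖q‖ < 1) :
    HasSum (fun p : ℤ × ℤ ↦ thetaTerm z q p.1 * thetaTerm w q p.2) (theta z q * theta w q) :=
  have hz := summable_thetaTerm z hq
  have hw := summable_thetaTerm w hq
  hz.hasSum.mul hw.hasSum (summable_mul_of_summable_norm hz.norm hw.norm)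

theorem theta_mul_theta (hz : z ≠ 0) (hw : w ≠ 0) (hq0 : q ≠ 0) (hq : ‖q‖ < 1) :
    theta z q * theta w q =
      theta (-(z * w)) (q ^ 2) * theta (-(z * q / w)) (q ^ 2) -
        z * (theta (-(z * w * q)) (q ^ 2) * theta (-(z * q ^ 2 / w)) (q ^ 2)) := by
  have hq2 := norm_pow_lt_one hq two_ne_zero
  have heven := hasSum_thetaTerm_mul_thetaTerm (-(z * w)) (-(z * q / w)) hq2
  have hodd := (hasSum_thetaTerm_mul_thetaTerm (-(z * w * q)) (-(z * q ^ 2 / w)) hq2).mul_left z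
  rw [sub_eq_add_neg]
  refine ((sumDiffEquiv.hasSum_iff).2 (hasSum_thetaTerm_mul_thetaTerm z w hq)).unique
    (HasSum.sum (heven.congr_fun fun p ↦ ?_) (hodd.neg.congr_fun fun p ↦ ?_))
  · exact thetaTerm_add_mul_thetaTerm_sub hz hw hq0 p.1 p.2
  · have h := thetaTerm_add_mul_thetaTerm_sub (mul_ne_zero hz hq0) hw hq0 p.1 p.2
    rw [mul_right_comm z q w, mul_assoc z q q, ← sq] at h
    rw [← h, ← mul_assoc, ← neg_mul, ← neg_mul, ← thetaTerm_add_one hz hq0]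
    rfl

end ThetaIdentities

section ProductEvaluations

variable {t : ℂ}

lemma theta_self_sq (h0 : t ≠ 0) (ht : ‖t‖ < 1) :
    theta t (t ^ 2) = eulerFn t ^ 2 / eulerFn (t ^ 2) := by
  have h2 := eulerFn_pow_ne_zero ht two_ne_zero
  have hdiv : t ^ 2 / t = t := by field_simp
  rw [theta_eq_qPoch_mul_qPoch_mul_eulerFn h0 (norm_pow_lt_one ht two_ne_zero), hdiv,
    qPoch_self_sq ht]
  field_simp

lemma theta_neg_one (ht : ‖t‖ < 1) : theta (-1) t = 2 * (eulerFn (t ^ 2) ^ 2 / eulerFn t) := by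
  have h1 := eulerFn_ne_zero ht
  rw [theta_eq_qPoch_mul_qPoch_mul_eulerFn (neg_ne_zero.2 one_ne_zero) ht,
    qPoch_eq_one_sub_mul (-1) ht, div_neg, div_one, neg_one_mul, qPoch_neg_self ht]
  field_simp
  ring

lemma theta_self_pow_six (h0 : t ≠ 0) (ht : ‖t‖ < 1) :
    theta t (t ^ 6) = eulerFn t * eulerFn (t ^ 6) ^ 2 / (eulerFn (t ^ 2) * eulerFn (t ^ 3)) := by
  have hdiv : t ^ 6 / t = t ^ 5 := by field_simp
  rw [theta_eq_qPoch_mul_qPoch_mul_eulerFn h0 (norm_pow_lt_one ht (by norm_num)), hdiv,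
    qPoch_mul_qPoch_pow_five ht]
  ring

lemma theta_neg_self_pow_three (h0 : t ≠ 0) (ht : ‖t‖ < 1) :
    theta (-t) (t ^ 3) =
      eulerFn (t ^ 2) * eulerFn (t ^ 3) ^ 2 / (eulerFn t * eulerFn (t ^ 6)) := by
  have hdiv : t ^ 3 / -t = -t ^ 2 := by field_simp
  rw [theta_eq_qPoch_mul_qPoch_mul_eulerFn (neg_ne_zero.2 h0)
    (norm_pow_lt_one ht three_ne_zero), hdiv, qPoch_neg_mul_qPoch_neg_sq ht]
  ring

lemma theta_neg_self_pow_six (h0 : t ≠ 0) (ht : ‖t‖ < 1) :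
    theta (-t) (t ^ 6) = eulerFn (t ^ 2) ^ 2 * eulerFn (t ^ 3) * eulerFn (t ^ 12) /
      (eulerFn t * eulerFn (t ^ 4) * eulerFn (t ^ 6)) := by
  have h := theta_self_pow_six (neg_ne_zero.2 h0) (by rwa [norm_neg])
  have hneg3 := eulerFn_neg (norm_pow_lt_one ht three_ne_zero)
  rw [Even.neg_pow (by decide), Even.neg_pow (by decide), Odd.neg_pow (by decide), hneg3,
    eulerFn_neg ht] at h
  simp only [← pow_mul, Nat.reduceMul] at h
  have h2 := eulerFn_pow_ne_zero ht two_ne_zero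
  have h3 := eulerFn_pow_ne_zero ht three_ne_zero
  have h6 := eulerFn_pow_ne_zero ht (m := 6) (by norm_num)
  rw [h]
  field_simp

lemma theta_self_pow_three (h0 : t ≠ 0) (ht : ‖t‖ < 1) : theta t (t ^ 3) = eulerFn t := by
  have hdiv : t ^ 3 / t = t ^ 2 := by field_simp
  rw [theta_eq_qPoch_mul_qPoch_mul_eulerFn h0 (norm_pow_lt_one ht three_ne_zero), hdiv,
    eulerFn_eq_prod_mul_eulerFn_pow ht three_ne_zero]
  simp [prod_range_succ]

end ProductEvaluations

section Dissections

variable {q : ℂ}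

/-- The left-hand side is Ramanujan's `φ(-q)`. -/
lemma ramanujanPhi_three_dissection (hq : ‖q‖ < 1) :
    eulerFn q ^ 2 / eulerFn (q ^ 2) = eulerFn (q ^ 9) ^ 2 / eulerFn (q ^ 18) -
      2 * q * (eulerFn (q ^ 3) * eulerFn (q ^ 18) ^ 2 / (eulerFn (q ^ 6) * eulerFn (q ^ 9))) := by
  rcases eq_or_ne q 0 with rfl | h0
  · simp [eulerFn_zero]
  have h18 : q ^ 18 ≠ 0 := pow_ne_zero 18 h0
  have hsplit := theta_three_dissection h0 (pow_ne_zero 2 h0) (norm_pow_lt_one hq two_ne_zero)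
  have h9 := theta_self_sq (pow_ne_zero 9 h0) (norm_pow_lt_one hq (by norm_num))
  have h3 := theta_self_pow_six (pow_ne_zero 3 h0) (norm_pow_lt_one hq three_ne_zero)
  have hsymm := theta_symm (pow_ne_zero 15 h0) h18 (norm_pow_lt_one hq (by norm_num))
  have hshift := theta_shift (pow_ne_zero 3 h0) h18
  have hdiv : q ^ 18 / q ^ 15 = q ^ 3 := by field_simp
  rw [theta_self_sq h0 hq] at hsplit
  simp only [← pow_mul, ← pow_add, hdiv, Nat.reduceMul, Nat.reduceAdd] at hsplit h9 h3 hsymm hshift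
  rw [hsplit, h9, hsymm, ← h3]
  linear_combination q * hshift

/-- The left-hand side is Ramanujan's `ψ(q)`. -/
lemma ramanujanPsi_three_dissection (hq : ‖q‖ < 1) :
    eulerFn (q ^ 2) ^ 2 / eulerFn q =
      eulerFn (q ^ 6) * eulerFn (q ^ 9) ^ 2 / (eulerFn (q ^ 3) * eulerFn (q ^ 18)) +
        q * (eulerFn (q ^ 18) ^ 2 / eulerFn (q ^ 9)) := by
  rcases eq_or_ne q 0 with rfl | h0
  · simp [eulerFn_zero]
  have h9 : q ^ 9 ≠ 0 := pow_ne_zero 9 h0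
  have hq9 := norm_pow_lt_one hq (m := 9) (by norm_num)
  have hsplit := theta_three_dissection (neg_ne_zero.2 one_ne_zero) h0 hq
  have hpsi := theta_neg_one hq9
  have h3 := theta_neg_self_pow_three (pow_ne_zero 3 h0) (norm_pow_lt_one hq three_ne_zero)
  have hsymm := theta_symm (neg_ne_zero.2 (pow_ne_zero 6 h0)) h9 hq9
  have hshift := theta_shift (neg_ne_zero.2 one_ne_zero) h9
  have hdiv : q ^ 9 / -q ^ 6 = -q ^ 3 := by field_simp
  have hneg : (-1 : ℂ) ^ 3 = -1 := by norm_num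
  rw [theta_neg_one hq] at hsplit
  simp only [← pow_mul, hdiv, hneg, neg_one_mul, neg_neg, one_mul, Nat.reduceMul]
    at hsplit hpsi h3 hsymm hshift
  rw [hsymm, h3, ← hshift, hpsi] at hsplit
  linear_combination hsplit / 2

lemma theta_mul_theta_two_dissection (h0 : q ≠ 0) (hq : ‖q‖ < 1) :
    theta (q ^ 3) (q ^ 6) * theta (-q) (q ^ 6) =
      theta (q ^ 4) (q ^ 12) ^ 2 + q * theta (q ^ 2) (q ^ 12) ^ 2 := by
  have h12 : q ^ 12 ≠ 0 := pow_ne_zero 12 h0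
  have hq12 := norm_pow_lt_one hq (m := 12) (by norm_num)
  have hmul := theta_mul_theta (pow_ne_zero 3 h0) (neg_ne_zero.2 h0) (pow_ne_zero 6 h0)
    (norm_pow_lt_one hq (by norm_num))
  have h8 := theta_symm (pow_ne_zero 8 h0) h12 hq12
  have h10 := theta_symm (pow_ne_zero 10 h0) h12 hq12
  have h2 := theta_shift (pow_ne_zero 2 h0) h12
  have h84 : q ^ 12 / q ^ 8 = q ^ 4 := by field_simp
  have h102 : q ^ 12 / q ^ 10 = q ^ 2 := by field_simp
  have hzw : -(q ^ 3 * -q) = q ^ 4 := by ring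
  have hzqw : -(q ^ 3 * q ^ 6 / -q) = q ^ 8 := by field_simp
  have hzwq : -(q ^ 3 * -q * q ^ 6) = q ^ 10 := by ring
  have hzq2w : -(q ^ 3 * (q ^ 6) ^ 2 / -q) = q ^ 14 := by field_simp
  rw [hzw, hzqw, hzwq, hzq2w] at hmul
  simp only [← pow_mul, ← pow_add, h84, h102, Nat.reduceMul, Nat.reduceAdd] at hmul h8 h10 h2
  rw [hmul, h8, h10]
  linear_combination -q * theta (q ^ 2) (q ^ 12) * h2

lemma eulerFn_cube_div_two_dissection (hq : ‖q‖ < 1) :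
    eulerFn (q ^ 3) ^ 3 / eulerFn q =
      eulerFn (q ^ 4) ^ 3 * eulerFn (q ^ 6) ^ 2 / (eulerFn (q ^ 2) ^ 2 * eulerFn (q ^ 12)) +
        q * (eulerFn (q ^ 12) ^ 3 / eulerFn (q ^ 4)) := by
  rcases eq_or_ne q 0 with rfl | h0
  · simp [eulerFn_zero]
  have h := theta_mul_theta_two_dissection h0 hq
  have h3 := theta_self_sq (pow_ne_zero 3 h0) (norm_pow_lt_one hq three_ne_zero)
  have h4 := theta_self_pow_three (pow_ne_zero 4 h0) (norm_pow_lt_one hq four_ne_zero)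
  have h2 := theta_self_pow_six (pow_ne_zero 2 h0) (norm_pow_lt_one hq two_ne_zero)
  simp only [← pow_mul, Nat.reduceMul] at h3 h4 h2
  rw [theta_neg_self_pow_six h0 hq, h3, h4, h2] at h
  have hf1 := eulerFn_ne_zero hq
  have hf2 := eulerFn_pow_ne_zero hq two_ne_zero
  have hf4 := eulerFn_pow_ne_zero hq four_ne_zero
  have hf6 := eulerFn_pow_ne_zero hq (m := 6) (by norm_num)
  have hf12 := eulerFn_pow_ne_zero hq (m := 12) (by norm_num)
  field_simp at h ⊢
  linear_combination h

lemma eulerFn_mul_eulerFn_sq_three_dissection (hq : ‖q‖ < 1) :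
    eulerFn q * eulerFn (q ^ 2) =
      eulerFn (q ^ 6) * eulerFn (q ^ 9) ^ 4 / (eulerFn (q ^ 3) * eulerFn (q ^ 18) ^ 2) -
        q * (eulerFn (q ^ 9) * eulerFn (q ^ 18)) -
        2 * q ^ 2 * (eulerFn (q ^ 3) * eulerFn (q ^ 18) ^ 4 /
          (eulerFn (q ^ 6) * eulerFn (q ^ 9) ^ 2)) := by
  have h1 := eulerFn_ne_zero hq
  have h2 := eulerFn_pow_ne_zero hq two_ne_zero
  have h3 := eulerFn_pow_ne_zero hq three_ne_zero
  have h6 := eulerFn_pow_ne_zero hq (m := 6) (by norm_num)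
  have h9 := eulerFn_pow_ne_zero hq (m := 9) (by norm_num)
  have h18 := eulerFn_pow_ne_zero hq (m := 18) (by norm_num)
  calc eulerFn q * eulerFn (q ^ 2)
      = eulerFn q ^ 2 / eulerFn (q ^ 2) * (eulerFn (q ^ 2) ^ 2 / eulerFn q) := by field_simp
    _ = _ := by
        rw [ramanujanPhi_three_dissection hq, ramanujanPsi_three_dissection hq]
        field_simp
        ring

lemma eulerFn_mul_eulerFn_sq_primitiveRoot_pow_mul {ω : ℂ} (hω : IsPrimitiveRoot ω 3)
    (hq : ‖q‖ < 1) (i : ℕ) :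
    eulerFn (ω ^ i * q) * eulerFn ((ω ^ i * q) ^ 2) =
      eulerFn (q ^ 6) * eulerFn (q ^ 9) ^ 4 / (eulerFn (q ^ 3) * eulerFn (q ^ 18) ^ 2) +
        ω ^ i * -(q * (eulerFn (q ^ 9) * eulerFn (q ^ 18))) +
        (ω ^ 2) ^ i * -(2 * q ^ 2 * (eulerFn (q ^ 3) * eulerFn (q ^ 18) ^ 4 /
          (eulerFn (q ^ 6) * eulerFn (q ^ 9) ^ 2))) := by
  have hpow (m : ℕ) := primitiveRoot_pow_mul_pow hω i q m
  have h3 := hpow 1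
  have h6 := hpow 2
  have h9 := hpow 3
  have h18 := hpow 6
  simp only [Nat.reduceMul] at h3 h6 h9 h18
  rw [eulerFn_mul_eulerFn_sq_three_dissection
    (by rwa [norm_primitiveRoot_pow_mul hω three_ne_zero]), h3, h6, h9, h18]
  ring

lemma prod_range_three_add_primitiveRoot_mul {R : Type*} [CommRing R] [IsDomain R] {ω : R}
    (hω : IsPrimitiveRoot ω 3) (a x y : R) :
    ∏ i ∈ range 3, (a + ω ^ i * x + (ω ^ 2) ^ i * y) = a ^ 3 + x ^ 3 + y ^ 3 - 3 * a * x * y := by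
  have hsum : 1 + ω + ω ^ 2 = 0 := by
    simpa [sum_range_succ] using hω.geom_sum_eq_zero (by norm_num)
  simp only [prod_range_succ, range_zero, prod_empty]
  grind [hω.pow_eq_one]

lemma prod_eulerFn_mul_eulerFn_sq {ω : ℂ} (hω : IsPrimitiveRoot ω 3) (hq : ‖q‖ < 1) :
    ∏ i ∈ range 3, eulerFn (ω ^ i * q) * eulerFn ((ω ^ i * q) ^ 2) =
      eulerFn (q ^ 3) ^ 4 * eulerFn (q ^ 6) ^ 4 / (eulerFn (q ^ 9) * eulerFn (q ^ 18)) := by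
  have h1 := prod_eulerFn_primitiveRoot_pow_mul Nat.prime_three hω hq
  have h2 := prod_eulerFn_primitiveRoot_pow_mul Nat.prime_three
    (hω.pow_of_coprime 2 (by norm_num)) (norm_pow_lt_one hq two_ne_zero)
  simp only [← pow_mul, Nat.reducePow, Nat.reduceMul, Nat.reduceAdd] at h1 h2
  simp only [prod_mul_distrib, mul_pow, pow_right_comm ω _ 2]
  simp only [← pow_mul, h1, h2]
  rw [div_mul_div_comm]

lemma one_div_eulerFn_mul_eulerFn_sq_three_dissection (hq : ‖q‖ < 1) :
    1 / (eulerFn q * eulerFn (q ^ 2)) =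
      eulerFn (q ^ 9) ^ 9 / (eulerFn (q ^ 3) ^ 6 * eulerFn (q ^ 6) ^ 2 * eulerFn (q ^ 18) ^ 3) -
          2 * q ^ 3 * (eulerFn (q ^ 18) ^ 6 / (eulerFn (q ^ 3) ^ 3 * eulerFn (q ^ 6) ^ 5)) +
        (eulerFn (q ^ 9) ^ 6 / (eulerFn (q ^ 3) ^ 5 * eulerFn (q ^ 6) ^ 3) +
          4 * q ^ 3 * (eulerFn (q ^ 18) ^ 9 /
            (eulerFn (q ^ 3) ^ 2 * eulerFn (q ^ 6) ^ 6 * eulerFn (q ^ 9) ^ 3))) * q +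
        3 * (eulerFn (q ^ 9) ^ 3 * eulerFn (q ^ 18) ^ 3 /
          (eulerFn (q ^ 3) ^ 4 * eulerFn (q ^ 6) ^ 4)) * q ^ 2 := by
  have hω := Complex.isPrimitiveRoot_exp 3 three_ne_zero
  set ω := Complex.exp (2 * Real.pi * Complex.I / (3 : ℕ))
  have h1 := eulerFn_ne_zero hq
  have h2 := eulerFn_pow_ne_zero hq two_ne_zero
  have h3 := eulerFn_pow_ne_zero hq three_ne_zero
  have h6 := eulerFn_pow_ne_zero hq (m := 6) (by norm_num)
  have h9 := eulerFn_pow_ne_zero hq (m := 9) (by norm_num)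
  have h18 := eulerFn_pow_ne_zero hq (m := 18) (by norm_num)
  set a := eulerFn (q ^ 6) * eulerFn (q ^ 9) ^ 4 / (eulerFn (q ^ 3) * eulerFn (q ^ 18) ^ 2) with ha
  set x := -(q * (eulerFn (q ^ 9) * eulerFn (q ^ 18))) with hx
  set y := -(2 * q ^ 2 * (eulerFn (q ^ 3) * eulerFn (q ^ 18) ^ 4 /
    (eulerFn (q ^ 6) * eulerFn (q ^ 9) ^ 2))) with hy
  have hconj (i : ℕ) : eulerFn (ω ^ i * q) * eulerFn ((ω ^ i * q) ^ 2) =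
      a + ω ^ i * x + (ω ^ 2) ^ i * y := eulerFn_mul_eulerFn_sq_primitiveRoot_pow_mul hω hq i
  have hF : eulerFn q * eulerFn (q ^ 2) = a + x + y := by simpa using hconj 0
  have hnorm : (a + x + y) * (a ^ 2 + x ^ 2 + y ^ 2 - a * x - a * y - x * y) =
      eulerFn (q ^ 3) ^ 4 * eulerFn (q ^ 6) ^ 4 / (eulerFn (q ^ 9) * eulerFn (q ^ 18)) := by
    rw [← prod_eulerFn_mul_eulerFn_sq hω hq]
    simp only [hconj, prod_range_three_add_primitiveRoot_mul hω]
    ring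
  rw [← hF] at hnorm
  have hrec : 1 / (eulerFn q * eulerFn (q ^ 2)) =
      (a ^ 2 + x ^ 2 + y ^ 2 - a * x - a * y - x * y) * (eulerFn (q ^ 9) * eulerFn (q ^ 18)) /
        (eulerFn (q ^ 3) ^ 4 * eulerFn (q ^ 6) ^ 4) := by
    field_simp at hnorm ⊢
    linear_combination -hnorm
  rw [hrec, ha, hx, hy]
  field_simp
  ring

end Dissections

section PowerSeriesEvaluation

open PowerSeries PowerSeries.WithPiTopology

variable {ι R : Type*} [NormedCommRing R]

/-- The `n`-th term of a power series with natural coefficients, evaluated at `z`. -/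
noncomputable def seriesTerm (F : ℕ⟦X⟧) (z : R) (n : ℕ) : R := (coeff n F : ℕ) * z ^ n

/-- The sum at `z` of a power series with natural coefficients, with the junk value `0` where the
series does not converge unconditionally. -/
noncomputable def seriesSum (F : ℕ⟦X⟧) (z : R) : R := ∑' n, seriesTerm F z n

lemma seriesTerm_nonneg (F : ℕ⟦X⟧) {r : ℝ} (hr : 0 ≤ r) (n : ℕ) : 0 ≤ seriesTerm F r n :=
  mul_nonneg (Nat.cast_nonneg _) (pow_nonneg hr n)

lemma hasSum_seriesTerm_one (z : R) : HasSum (seriesTerm 1 z) 1 := by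
  simpa [seriesTerm] using
    hasSum_single (f := seriesTerm 1 z) 0 fun n hn ↦ by simp [seriesTerm, coeff_one, hn]

lemma seriesTerm_mul (F G : ℕ⟦X⟧) (z : R) (n : ℕ) :
    seriesTerm (F * G) z n = ∑ p ∈ antidiagonal n, seriesTerm F z p.1 * seriesTerm G z p.2 := by
  simp only [seriesTerm, coeff_mul, Nat.cast_sum, Nat.cast_mul, sum_mul]
  refine sum_congr rfl fun p hp ↦ ?_
  rw [← mem_antidiagonal.1 hp, pow_add]
  ring

lemma tendsto_seriesTerm_prod {F : ι → ℕ⟦X⟧} {G : ℕ⟦X⟧} (hFG : HasProd F G) (z : R) (n : ℕ) :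
    Tendsto (fun s ↦ seriesTerm (∏ i ∈ s, F i) z n) atTop (𝓝 (seriesTerm G z n)) :=
  ((continuous_of_discreteTopology.tendsto (coeff n G)).comp
    ((tendsto_iff_coeff_tendsto ..).1 hFG n)).mul_const (z ^ n)

lemma summable_seriesTerm_prod {F : ι → ℕ⟦X⟧} {r : ℝ} (hF : ∀ i, Summable (seriesTerm (F i) r))
    (s : Finset ι) : Summable (seriesTerm (∏ i ∈ s, F i) r) := by
  refine prod_induction F (fun G ↦ Summable (seriesTerm G r)) (fun A B hA hB ↦ ?_)
    (hasSum_seriesTerm_one r).summable fun i _ ↦ hF i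
  simp only [funext (seriesTerm_mul A B r)]
  exact (summable_norm_sum_mul_antidiagonal_of_summable_norm hA.norm hB.norm).of_norm

lemma coeff_prod_mono {F : ι → ℕ⟦X⟧} (hF : ∀ i, constantCoeff (F i) ≠ 0) (n : ℕ) :
    Monotone fun s : Finset ι ↦ coeff n (∏ i ∈ s, F i) := by
  classical
  intro s t hst
  have hconst : 0 < coeff 0 (∏ i ∈ t \ s, F i) := by
    rw [coeff_zero_eq_constantCoeff_apply, map_prod]
    exact Nat.pos_of_ne_zero (prod_ne_zero_iff.2 fun i _ ↦ hF i)
  calc coeff n (∏ i ∈ s, F i)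
      ≤ coeff 0 (∏ i ∈ t \ s, F i) * coeff n (∏ i ∈ s, F i) := Nat.le_mul_of_pos_left _ hconst
    _ ≤ coeff n ((∏ i ∈ t \ s, F i) * ∏ i ∈ s, F i) := by
        rw [coeff_mul]
        exact single_le_sum (f := fun p ↦ coeff p.1 (∏ i ∈ t \ s, F i) * coeff p.2 (∏ i ∈ s, F i))
          (fun _ _ ↦ Nat.zero_le _) (show (0, n) ∈ antidiagonal n by simp)
    _ = coeff n (∏ i ∈ t, F i) := by rw [prod_sdiff hst]

lemma coeff_prod_le_coeff_of_hasProd {F : ι → ℕ⟦X⟧} {G : ℕ⟦X⟧} (hFG : HasProd F G)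
    (hF : ∀ i, constantCoeff (F i) ≠ 0) (s : Finset ι) (n : ℕ) :
    coeff n (∏ i ∈ s, F i) ≤ coeff n G :=
  (coeff_prod_mono hF n).ge_of_tendsto ((tendsto_iff_coeff_tendsto ..).1 hFG n) s

variable [NormOneClass R]

lemma norm_seriesTerm_le (F : ℕ⟦X⟧) (z : R) (n : ℕ) :
    ‖seriesTerm F z n‖ ≤ seriesTerm F ‖z‖ n := by
  refine (norm_mul_le _ _).trans (mul_le_mul ?_ (norm_pow_le z n) (norm_nonneg _) (by positivity))
  simpa using Nat.norm_cast_le (α := R) (coeff n F)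

lemma summable_norm_seriesTerm {F : ℕ⟦X⟧} {z : R} (hF : Summable (seriesTerm F ‖z‖)) :
    Summable fun n ↦ ‖seriesTerm F z n‖ :=
  hF.of_nonneg_of_le (fun _ ↦ norm_nonneg _) (norm_seriesTerm_le F z)

variable [CompleteSpace R]

lemma seriesSum_mul {F G : ℕ⟦X⟧} {z : R} (hF : Summable (seriesTerm F ‖z‖))
    (hG : Summable (seriesTerm G ‖z‖)) :
    seriesSum (F * G) z = seriesSum F z * seriesSum G z := by
  rw [seriesSum, seriesSum, seriesSum, tsum_mul_tsum_eq_tsum_sum_antidiagonal_of_summable_norm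
    (summable_norm_seriesTerm hF) (summable_norm_seriesTerm hG)]
  exact tsum_congr (seriesTerm_mul F G z)

lemma seriesSum_prod {F : ι → ℕ⟦X⟧} {z : R} (hF : ∀ i, Summable (seriesTerm (F i) ‖z‖))
    (s : Finset ι) : seriesSum (∏ i ∈ s, F i) z = ∏ i ∈ s, seriesSum (F i) z := by
  classical
  induction s using Finset.induction_on with
  | empty => exact (hasSum_seriesTerm_one z).tsum_eq
  | insert i s his ih =>
    rw [prod_insert his, prod_insert his, seriesSum_mul (hF i) (summable_seriesTerm_prod hF s), ih]

lemma summable_seriesTerm_of_hasProd {F : ι → ℕ⟦X⟧} {G : ℕ⟦X⟧} (hFG : HasProd F G) {r : ℝ}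
    (hr : 0 ≤ r) (hF : ∀ i, Summable (seriesTerm (F i) r))
    (hmul : Multipliable fun i ↦ seriesSum (F i) r) : Summable (seriesTerm G r) := by
  have hF' (i : ι) : Summable (seriesTerm (F i) ‖r‖) := by rw [Real.norm_of_nonneg hr]; exact hF i
  refine summable_of_sum_le (c := ∏' i, seriesSum (F i) r) (seriesTerm_nonneg G hr) fun u ↦ ?_
  refine le_of_tendsto_of_tendsto' (tendsto_finsetSum u fun n _ ↦ tendsto_seriesTerm_prod hFG r n)
    hmul.hasProd fun s ↦ ?_
  rw [← seriesSum_prod hF']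
  exact (summable_seriesTerm_prod hF s).sum_le_tsum u fun n _ ↦ seriesTerm_nonneg _ hr n

theorem hasProd_seriesSum {F : ι → ℕ⟦X⟧} {G : ℕ⟦X⟧} (hFG : HasProd F G)
    (hconst : ∀ i, constantCoeff (F i) ≠ 0) {z : R} (hF : ∀ i, Summable (seriesTerm (F i) ‖z‖))
    (hmul : Multipliable fun i ↦ seriesSum (F i) ‖z‖) :
    HasProd (fun i ↦ seriesSum (F i) z) (seriesSum G z) := by
  simp only [HasProd, SummationFilter.unconditional_filter, ← seriesSum_prod hF]
  refine tendsto_tsum_of_dominated_convergence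
    (summable_seriesTerm_of_hasProd hFG (norm_nonneg z) hF hmul) (tendsto_seriesTerm_prod hFG z)
    (.of_forall fun s n ↦ (norm_seriesTerm_le _ z n).trans ?_)
  unfold seriesTerm
  gcongr
  exact coeff_prod_le_coeff_of_hasProd hFG hconst s n

end PowerSeriesEvaluation

section DesignatedSummands

open PowerSeries PowerSeries.WithPiTopology

lemma hasSum_smul_X_pow (a : ℕ → ℕ) {e : ℕ → ℕ} (he : Function.Injective e) :
    HasSum (fun j ↦ a j • (X : ℕ⟦X⟧) ^ e j) (PowerSeries.mk (Function.extend e a 0)) := by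
  rw [hasSum_iff_hasSum_coeff]
  intro n
  simp only [map_nsmul, coeff_X_pow, coeff_mk, smul_eq_mul, mul_ite, mul_one, mul_zero]
  by_cases hn : ∃ j, e j = n
  · obtain ⟨j, rfl⟩ := hn
    simpa [he.extend_apply] using
      hasSum_single (f := fun i ↦ if e j = e i then a i else 0) j fun i hi ↦
        if_neg (he.ne hi.symm)
  · simp only [not_exists, eq_comm] at hn
    rw [Function.extend_apply' _ _ _ (by simpa [eq_comm] using hn)]
    simp [hn, hasSum_zero]

lemma hasSum_seriesTerm_tsum_smul_X_pow {R : Type*} [NormedCommRing R] {a e : ℕ → ℕ}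
    (he : Function.Injective e) {z s : R} (h : HasSum (fun j ↦ (a j : R) * z ^ e j) s) :
    HasSum (seriesTerm (∑' j, a j • X ^ e j) z) s := by
  rw [(hasSum_smul_X_pow a he).tsum_eq, ← he.hasSum_iff fun n hn ↦ ?_]
  · simpa only [Function.comp_def, seriesTerm, coeff_mk, he.extend_apply] using h
  · rw [seriesTerm, coeff_mk, Function.extend_apply' _ _ _ hn, Pi.zero_apply, Nat.cast_zero,
      zero_mul]

/-- The contribution `1 + ∑ j X ^ (k j)` of the parts of size `k` to the generating function of
partitions with designated summands: there are `j` ways to designate one of `j` equal parts. -/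
noncomputable def designatedFactor (k : ℕ) : ℕ⟦X⟧ := 1 + ∑' j, (j + 1) • X ^ (k * (j + 1))

lemma constantCoeff_designatedFactor_ne_zero (k : ℕ) : constantCoeff (designatedFactor k) ≠ 0 := by
  rw [designatedFactor, map_add, map_one]
  exact (Nat.add_pos_left one_pos _).ne'

lemma hasProd_designatedFactor :
    HasProd (fun i ↦ designatedFactor (i + 1)) (PowerSeries.mk PD) := by
  have hseries : PowerSeries.mk PD = Nat.Partition.genFun fun _ c ↦ c := by
    ext n
    simp [PD, Finsupp.prod]
  rw [hseries]
  exact Nat.Partition.hasProd_genFun fun _ c ↦ c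

lemma hasSum_seriesTerm_designatedFactor {𝕜 : Type*} [NormedField 𝕜] {z : 𝕜}
    (hz : ‖z‖ < 1) {k : ℕ} (hk : k ≠ 0) :
    HasSum (seriesTerm (designatedFactor k) z) (1 + z ^ k / (1 - z ^ k) ^ 2) := by
  have hgeom : HasSum (fun j : ℕ ↦ ((j + 1 : ℕ) : 𝕜) * z ^ (k * (j + 1)))
      (z ^ k / (1 - z ^ k) ^ 2) := by
    have h := hasSum_coe_mul_geometric_of_norm_lt_one (norm_pow_lt_one hz hk)
    simpa [pow_mul] using (hasSum_nat_add_iff' (f := fun j : ℕ ↦ (j : 𝕜) * (z ^ k) ^ j) 1).2 h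
  have hinj : Function.Injective fun j ↦ k * (j + 1) :=
    (mul_right_injective₀ hk).comp (add_left_injective 1)
  refine ((hasSum_seriesTerm_one z).add (hasSum_seriesTerm_tsum_smul_X_pow hinj hgeom)).congr_fun
    fun n ↦ ?_
  simp [seriesTerm, designatedFactor, add_mul]

lemma multipliable_seriesSum_designatedFactor {r : ℝ} (hr : 0 ≤ r) (hr1 : r < 1) :
    Multipliable fun i ↦ seriesSum (designatedFactor (i + 1)) r := by
  have hnorm : ‖r‖ < 1 := by rwa [Real.norm_of_nonneg hr]
  simp only [seriesSum, (hasSum_seriesTerm_designatedFactor hnorm (Nat.succ_ne_zero _)).tsum_eq]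
  refine multipliable_one_add_of_summable (Summable.of_nonneg_of_le (fun _ ↦ norm_nonneg _)
    (fun i ↦ ?_) ((summable_geometric_of_lt_one hr hr1).mul_right ((1 - r) ^ 2)⁻¹))
  have hle : r ^ (i + 1) ≤ r := pow_le_of_le_one hr hr1.le i.succ_ne_zero
  have : 0 < 1 - r := sub_pos.2 hr1
  rw [Real.norm_of_nonneg (by positivity), div_eq_mul_inv]
  gcongr ?_ * (?_ ^ 2)⁻¹
  · exact pow_le_pow_of_le_one hr hr1.le i.le_succ
  · exact sub_le_sub_left hle 1

lemma one_add_div_one_sub_sq {𝕜 : Type*} [NormedField 𝕜] {y : 𝕜} (hy : ‖y‖ < 1) :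
    1 + y / (1 - y) ^ 2 = (1 - y ^ 6) / ((1 - y) * (1 - y ^ 2) * (1 - y ^ 3)) := by
  have hne (m : ℕ) (hm : m ≠ 0) : 1 - y ^ m ≠ 0 := fun h ↦
    (norm_pow_lt_one hy hm).ne (by rw [← sub_eq_zero.1 h, norm_one])
  have h1 : 1 - y ≠ 0 := by simpa using hne 1 one_ne_zero
  have h2 := hne 2 two_ne_zero
  have h3 := hne 3 three_ne_zero
  field_simp
  ring

variable {q : ℂ}

lemma hasProd_one_sub_pow_eulerFn (hq : ‖q‖ < 1) {m : ℕ} (hm : m ≠ 0) :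
    HasProd (fun i : ℕ ↦ 1 - (q ^ (i + 1)) ^ m) (eulerFn (q ^ m)) := by
  refine (hasProd_qPoch (q ^ m) (norm_pow_lt_one hq hm)).congr_fun fun i ↦ ?_
  ring

lemma hasProd_one_add_div_one_sub_sq (hq : ‖q‖ < 1) :
    HasProd (fun i : ℕ ↦ 1 + q ^ (i + 1) / (1 - q ^ (i + 1)) ^ 2)
      (eulerFn (q ^ 6) / (eulerFn q * eulerFn (q ^ 2) * eulerFn (q ^ 3))) := by
  have hne : eulerFn q * eulerFn (q ^ 2) * eulerFn (q ^ 3) ≠ 0 :=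
    mul_ne_zero (mul_ne_zero (eulerFn_ne_zero hq) (eulerFn_pow_ne_zero hq two_ne_zero))
      (eulerFn_pow_ne_zero hq three_ne_zero)
  have hE {m : ℕ} := hasProd_one_sub_pow_eulerFn hq (m := m)
  have h1 : HasProd (fun i : ℕ ↦ 1 - q ^ (i + 1)) (eulerFn q) := by simpa using hE one_ne_zero
  refine ((hE (by norm_num)).div₀ ((h1.mul (hE two_ne_zero)).mul (hE three_ne_zero))
    hne).congr_fun fun i ↦ ?_
  exact one_add_div_one_sub_sq (norm_pow_lt_one hq i.succ_ne_zero)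

theorem hasSum_PD (hq : ‖q‖ < 1) : HasSum (fun n ↦ (PD n : ℂ) * q ^ n)
    (eulerFn (q ^ 6) / (eulerFn q * eulerFn (q ^ 2) * eulerFn (q ^ 3))) := by
  have hfactor (i : ℕ) : seriesSum (designatedFactor (i + 1)) q =
      1 + q ^ (i + 1) / (1 - q ^ (i + 1)) ^ 2 :=
    (hasSum_seriesTerm_designatedFactor hq i.succ_ne_zero).tsum_eq
  have hsummable (i : ℕ) : Summable (seriesTerm (designatedFactor (i + 1)) ‖q‖) :=
    (hasSum_seriesTerm_designatedFactor (by rwa [norm_norm]) i.succ_ne_zero).summable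
  have hmul := multipliable_seriesSum_designatedFactor (norm_nonneg q) hq
  have hPD := summable_norm_seriesTerm (R := ℂ)
    (summable_seriesTerm_of_hasProd hasProd_designatedFactor (norm_nonneg q) hsummable hmul)
  have hprod := hasProd_seriesSum hasProd_designatedFactor
    (fun i ↦ constantCoeff_designatedFactor_ne_zero (i + 1)) hsummable hmul
  have hterm : seriesTerm (PowerSeries.mk PD) q = fun n ↦ (PD n : ℂ) * q ^ n := by
    ext n
    rw [seriesTerm, coeff_mk]
  simp only [hfactor] at hprod
  rw [(hasProd_one_add_div_one_sub_sq hq).unique hprod, ← hterm]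
  exact hPD.of_norm.hasSum

end DesignatedSummands

section Multisection

lemma sum_primitiveRoot_pow_pow {R : Type*} [CommRing R] [IsDomain R] {ζ : R} {k : ℕ}
    (hζ : IsPrimitiveRoot ζ k) (n : ℕ) :
    ∑ i ∈ range k, (ζ ^ i) ^ n = if k ∣ n then (k : R) else 0 := by
  simp only [pow_right_comm ζ _ n]
  split_ifs with hn
  · simp [(hζ.pow_eq_one_iff_dvd n).2 hn]
  · have hne : 1 - ζ ^ n ≠ 0 := sub_ne_zero.2 fun h ↦ hn ((hζ.pow_eq_one_iff_dvd n).1 h.symm)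
    refine (mul_eq_zero.1 ?_).resolve_left hne
    rw [mul_neg_geom_sum, pow_right_comm, hζ.pow_eq_one, one_pow, sub_self]

lemma sum_primitiveRoot_pow_sum_fin {R : Type*} [CommRing R] [IsDomain R] {ζ : R} {k : ℕ}
    [NeZero k] (hζ : IsPrimitiveRoot ζ k) (c : Fin k → R) (x : R) :
    ∑ i ∈ range k, ∑ j, c j * (ζ ^ i * x) ^ (j : ℕ) = k * c 0 := by
  have hdvd (j : Fin k) : k ∣ j ↔ j = 0 :=
    ⟨fun h ↦ Fin.ext (Nat.eq_zero_of_dvd_of_lt h j.2), by rintro rfl; simp⟩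
  rw [sum_comm]
  simp only [mul_pow, mul_left_comm (c _), ← sum_mul, sum_primitiveRoot_pow_pow hζ, hdvd]
  simp

theorem hasSum_multisection {ζ : ℂ} {k : ℕ} [NeZero k] (hζ : IsPrimitiveRoot ζ k) {a : ℕ → ℂ}
    {q : ℂ} {c : Fin k → ℂ}
    (h : ∀ i, HasSum (fun n ↦ a n * (ζ ^ i * q) ^ n) (∑ j, c j * (ζ ^ i * q) ^ (j : ℕ))) :
    HasSum (fun n ↦ a (k * n) * (q ^ k) ^ n) (c 0) := by
  have hk : (k : ℂ) ≠ 0 := NeZero.ne _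
  have haverage : HasSum (fun n ↦ if k ∣ n then a n * q ^ n else 0) (c 0) := by
    have hsum := (hasSum_sum fun i (_ : i ∈ range k) ↦ h i).div_const (k : ℂ)
    rw [sum_primitiveRoot_pow_sum_fin hζ, mul_div_cancel_left₀ _ hk] at hsum
    refine hsum.congr_fun fun n ↦ ?_
    simp only [mul_pow, mul_left_comm (a n), ← sum_mul, sum_primitiveRoot_pow_pow hζ]
    split_ifs
    · field_simp
    · simp
  rw [← (mul_right_injective₀ (NeZero.ne k)).hasSum_iff] at haverage
  · simpa [Function.comp_def, pow_mul] using haverage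
  · intro n hn
    exact if_neg fun ⟨m, hm⟩ ↦ hn ⟨m, hm.symm⟩

end Multisection

section Trisection

variable {q : ℂ}

lemma generatingFunction_PD_three_dissection (hq : ‖q‖ < 1) :
    eulerFn (q ^ 6) / (eulerFn q * eulerFn (q ^ 2) * eulerFn (q ^ 3)) =
      eulerFn (q ^ 9) ^ 9 / (eulerFn (q ^ 3) ^ 7 * eulerFn (q ^ 6) * eulerFn (q ^ 18) ^ 3) -
          2 * q ^ 3 * (eulerFn (q ^ 18) ^ 6 / (eulerFn (q ^ 3) ^ 4 * eulerFn (q ^ 6) ^ 4)) +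
        (eulerFn (q ^ 9) ^ 6 / (eulerFn (q ^ 3) ^ 6 * eulerFn (q ^ 6) ^ 2) +
          4 * q ^ 3 * (eulerFn (q ^ 18) ^ 9 /
            (eulerFn (q ^ 3) ^ 3 * eulerFn (q ^ 6) ^ 5 * eulerFn (q ^ 9) ^ 3))) * q +
        3 * (eulerFn (q ^ 9) ^ 3 * eulerFn (q ^ 18) ^ 3 /
          (eulerFn (q ^ 3) ^ 5 * eulerFn (q ^ 6) ^ 3)) * q ^ 2 := by
  have h3 := eulerFn_pow_ne_zero hq three_ne_zero
  have h6 := eulerFn_pow_ne_zero hq (m := 6) (by norm_num)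
  have h9 := eulerFn_pow_ne_zero hq (m := 9) (by norm_num)
  have h18 := eulerFn_pow_ne_zero hq (m := 18) (by norm_num)
  have hfactor : eulerFn (q ^ 6) / (eulerFn q * eulerFn (q ^ 2) * eulerFn (q ^ 3)) =
      eulerFn (q ^ 6) / eulerFn (q ^ 3) * (1 / (eulerFn q * eulerFn (q ^ 2))) := by
    rw [div_mul_div_comm, mul_one, mul_comm (eulerFn (q ^ 3))]
  rw [hfactor, one_div_eulerFn_mul_eulerFn_sq_three_dissection hq]
  field_simp

theorem hasSum_PD_three_mul (hq : ‖q‖ < 1) :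
    HasSum (fun n ↦ (PD (3 * n) : ℂ) * q ^ n)
      (eulerFn (q ^ 3) ^ 9 / (eulerFn q ^ 7 * eulerFn (q ^ 2) * eulerFn (q ^ 6) ^ 3) -
        2 * q * (eulerFn (q ^ 6) ^ 6 / (eulerFn q ^ 4 * eulerFn (q ^ 2) ^ 4))) := by
  obtain ⟨r, rfl⟩ := IsAlgClosed.exists_pow_nat_eq q three_pos
  have hr : ‖r‖ < 1 := by
    rwa [norm_pow, pow_lt_one_iff_of_nonneg (norm_nonneg r) three_ne_zero] at hq
  have hω := Complex.isPrimitiveRoot_exp 3 three_ne_zero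
  set B := eulerFn (r ^ 9) ^ 6 / (eulerFn (r ^ 3) ^ 6 * eulerFn (r ^ 6) ^ 2) +
    4 * r ^ 3 * (eulerFn (r ^ 18) ^ 9 /
      (eulerFn (r ^ 3) ^ 3 * eulerFn (r ^ 6) ^ 5 * eulerFn (r ^ 9) ^ 3)) with hB
  set C := 3 * (eulerFn (r ^ 9) ^ 3 * eulerFn (r ^ 18) ^ 3 /
    (eulerFn (r ^ 3) ^ 5 * eulerFn (r ^ 6) ^ 3)) with hC
  refine hasSum_multisection hω (a := fun n ↦ (PD n : ℂ)) (c := ![_, B, C]) fun i ↦ ?_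
  have hnorm := (norm_primitiveRoot_pow_mul hω three_ne_zero i r).trans_lt hr
  have hpow (m : ℕ) := primitiveRoot_pow_mul_pow hω i r m
  have h3 := hpow 1
  have h6 := hpow 2
  have h9 := hpow 3
  have h18 := hpow 6
  simp only [Nat.reduceMul] at h3 h6 h9 h18
  have h := hasSum_PD hnorm
  rw [generatingFunction_PD_three_dissection hnorm, h3, h6, h9, h18, ← hB, ← hC] at h
  simpa [Fin.sum_univ_three, ← pow_mul] using h

lemma eulerFn_cube_div_neg_two_dissection (hq : ‖q‖ < 1) :
    eulerFn (q ^ 6) ^ 9 * eulerFn q * eulerFn (q ^ 4) /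
        (eulerFn (q ^ 3) ^ 3 * eulerFn (q ^ 12) ^ 3 * eulerFn (q ^ 2) ^ 3) =
      eulerFn (q ^ 4) ^ 3 * eulerFn (q ^ 6) ^ 2 / (eulerFn (q ^ 2) ^ 2 * eulerFn (q ^ 12)) -
        q * (eulerFn (q ^ 12) ^ 3 / eulerFn (q ^ 4)) := by
  have h := eulerFn_cube_div_two_dissection (q := -q) (by rwa [norm_neg])
  have hneg3 := eulerFn_neg (norm_pow_lt_one hq three_ne_zero)
  simp only [← pow_mul, Nat.reduceMul] at hneg3
  simp only [Odd.neg_pow (n := 3) (by decide), Even.neg_pow (n := 2) (by decide),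
    Even.neg_pow (n := 4) (by decide), Even.neg_pow (n := 6) (by decide),
    Even.neg_pow (n := 12) (by decide), eulerFn_neg hq, hneg3] at h
  have h1 := eulerFn_ne_zero hq
  have h2 := eulerFn_pow_ne_zero hq two_ne_zero
  have h4 := eulerFn_pow_ne_zero hq four_ne_zero
  rw [neg_mul, ← sub_eq_add_neg] at h
  rw [← h]
  field_simp

lemma generatingFunction_PD_three_mul_eq (hq : ‖q‖ < 1) :
    eulerFn (q ^ 3) ^ 9 / (eulerFn q ^ 7 * eulerFn (q ^ 2) * eulerFn (q ^ 6) ^ 3) -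
        2 * q * (eulerFn (q ^ 6) ^ 6 / (eulerFn q ^ 4 * eulerFn (q ^ 2) ^ 4)) =
      eulerFn (q ^ 3) ^ 3 / (eulerFn q ^ 5 * eulerFn (q ^ 2) * eulerFn (q ^ 6) ^ 3) *
        ((eulerFn (q ^ 4) ^ 3 * eulerFn (q ^ 6) ^ 2 /
            (eulerFn (q ^ 2) ^ 2 * eulerFn (q ^ 12))) ^ 2 +
          3 * (q * (eulerFn (q ^ 12) ^ 3 / eulerFn (q ^ 4))) ^ 2) := by
  have h1 := eulerFn_ne_zero hq
  have h2 := eulerFn_pow_ne_zero hq two_ne_zero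
  have h3 := eulerFn_pow_ne_zero hq three_ne_zero
  have h4 := eulerFn_pow_ne_zero hq four_ne_zero
  have h6 := eulerFn_pow_ne_zero hq (m := 6) (by norm_num)
  have h12 := eulerFn_pow_ne_zero hq (m := 12) (by norm_num)
  have hpos := eulerFn_cube_div_two_dissection hq
  have hneg := eulerFn_cube_div_neg_two_dissection hq
  set P := eulerFn (q ^ 4) ^ 3 * eulerFn (q ^ 6) ^ 2 / (eulerFn (q ^ 2) ^ 2 * eulerFn (q ^ 12))
  have hsquares : P ^ 2 + 3 * (q * (eulerFn (q ^ 12) ^ 3 / eulerFn (q ^ 4))) ^ 2 =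
      (eulerFn (q ^ 3) ^ 3 / eulerFn q) ^ 2 - 2 * (q * (eulerFn (q ^ 12) ^ 3 / eulerFn (q ^ 4))) *
        (eulerFn (q ^ 6) ^ 9 * eulerFn q * eulerFn (q ^ 4) /
          (eulerFn (q ^ 3) ^ 3 * eulerFn (q ^ 12) ^ 3 * eulerFn (q ^ 2) ^ 3)) := by
    rw [hpos, hneg]
    ring
  rw [hsquares]
  field_simp

lemma qPoch_pow_six_denominator (hq : ‖q‖ < 1) :
    qPoch q (q ^ 6) ^ 5 * qPoch (q ^ 3) (q ^ 6) ^ 2 * qPoch (q ^ 5) (q ^ 6) ^ 5 =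
      eulerFn q ^ 5 * eulerFn (q ^ 6) ^ 3 / (eulerFn (q ^ 2) ^ 5 * eulerFn (q ^ 3) ^ 3) := by
  have h3 := eulerFn_pow_ne_zero hq three_ne_zero
  have h6 := eulerFn_pow_ne_zero hq (m := 6) (by norm_num)
  have hodd := qPoch_self_sq (norm_pow_lt_one hq three_ne_zero)
  simp only [← pow_mul, Nat.reduceMul] at hodd
  rw [mul_right_comm, ← mul_pow, qPoch_mul_qPoch_pow_five hq, hodd]
  field_simp

end Trisection

theorem generating_function_PD_three_n (q : ℂ) (hq : ‖q‖ < 1) :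
    ∑' n : ℕ, (PD (3 * n) : ℂ) * q ^ n =
      1 / (qPoch q (q ^ 6) ^ 5 * qPoch (q ^ 3) (q ^ 6) ^ 2 * qPoch (q ^ 5) (q ^ 6) ^ 5) *
        (qPoch (q ^ 4) (q ^ 4) ^ 6 * qPoch (q ^ 6) (q ^ 6) ^ 4 /
            (qPoch (q ^ 2) (q ^ 2) ^ 10 * qPoch (q ^ 12) (q ^ 12) ^ 2) +
          3 * q ^ 2 * qPoch (q ^ 12) (q ^ 12) ^ 6 /
            (qPoch (q ^ 2) (q ^ 2) ^ 6 * qPoch (q ^ 4) (q ^ 4) ^ 2)) := by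
  rw [(hasSum_PD_three_mul hq).tsum_eq, generatingFunction_PD_three_mul_eq hq,
    qPoch_pow_six_denominator hq]
  simp only [qPoch_self]
  have h2 := eulerFn_pow_ne_zero hq two_ne_zero
  have h4 := eulerFn_pow_ne_zero hq four_ne_zero
  have h12 := eulerFn_pow_ne_zero hq (m := 12) (by norm_num)
  field_simp
end
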